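/- arXiv:1605.07061 — 3 statements merged into one kernel-verified Lean document; each statement's English description precedes it below -/
import Mathlib

section
/- Let M ∈ ℚ_+^{n×m} be a nonnegative rational matrix with rank(M) ≤ 3 and let d = rrk+(M). Then there exist nonnegative rational matrices W ∈ ℚ_+^{n×d} and H ∈ ℚ_+^{d×m} with M = W·H and rank(W) = rank(M). In particular, the restricted nonnegative ranks of M over ℝ and over ℚ coincide. -/
open Matrix

/-- The restricted nonnegative rank over `ℝ`: the smallest inner dimension of a
nonnegative factorization `M = W * H` with `rank W = rank M`. -/
noncomputable def rrkPos {n m : ℕ} (M : Matrix (Fin n) (Fin m) ℝ) : ℕ :=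
  sInf {d : ℕ | ∃ W : Matrix (Fin n) (Fin d) ℝ, ∃ H : Matrix (Fin d) (Fin m) ℝ,
    (∀ i k, 0 ≤ W i k) ∧ (∀ k j, 0 ≤ H k j) ∧ M = W * H ∧ W.rank = M.rank}

/-- The restricted nonnegative rank over `ℚ` of a rational matrix. -/
noncomputable def rrkPosQ {n m : ℕ} (M : Matrix (Fin n) (Fin m) ℚ) : ℕ :=
  sInf {d : ℕ | ∃ W : Matrix (Fin n) (Fin d) ℚ, ∃ H : Matrix (Fin d) (Fin m) ℚ,
    (∀ i k, 0 ≤ W i k) ∧ (∀ k j, 0 ≤ H k j) ∧ M = W * H ∧ W.rank = M.rank}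

/-!
A rank factorization `M = A * B` over `ℚ` turns a restricted factorization of `M` with inner
dimension `d` into a cone with `d` generators that contains the columns of `B` and is contained in
the cone `A x ≥ 0`; for rank `3` this is a polygon nested between two rational polygons. Among all
real solutions take one whose set of rational rays is maximal. An irrational ray of it lies on a
facet of the outer cone, since otherwise a nearby rational ray could replace it, and is the start of
an edge through a generator of the inner cone, whose other end is again irrational. Following these
edges gives a cycle. If one ray of the cycle moves along its facet and drags the others along so
that the edges still pass through their generators, then the condition at the last edge says that a
quadratic polynomial with rational coefficients in the position of the moving ray is nonnegative.
This polynomial vanishes at the original irrational position, so it is zero or that root is simple,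
and in both cases it is nonnegative at some nearby rational position. This contradicts maximality.
-/

open Filter Topology

section Rationality

variable {L : Type*} [Field L] {K : Subfield L} {σ : Type*}

variable (K) in
/-- Vectors with all coordinates in the subfield `K`; for `K = ℚ` these are the rational vectors. -/
def IsRational (x : σ → L) : Prop := ∀ i, x i ∈ K

variable (K) in
/-- Vectors that are a multiple of a `K`-rational vector: the zero vector, and the vectors spanning
a line defined over `K`. -/
def IsProjRational (x : σ → L) : Prop := ∃ (c : L) (q : σ → L), IsRational K q ∧ x = c • q

namespace IsRational

lemma zero : IsRational K (0 : σ → L) := fun _ => K.zero_mem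

lemma single [DecidableEq σ] (i : σ) : IsRational K (Pi.single i (1 : L)) := fun j => by
  rcases eq_or_ne j i with rfl | h
  · simp
  · simp [h]

lemma add {x y : σ → L} (hx : IsRational K x) (hy : IsRational K y) : IsRational K (x + y) :=
  fun i => K.add_mem (hx i) (hy i)

lemma sub {x y : σ → L} (hx : IsRational K x) (hy : IsRational K y) : IsRational K (x - y) :=
  fun i => K.sub_mem (hx i) (hy i)

lemma smul {c : L} {x : σ → L} (hc : c ∈ K) (hx : IsRational K x) : IsRational K (c • x) :=
  fun i => K.mul_mem hc (hx i)

lemma dotProduct_mem [Fintype σ] {x y : σ → L} (hx : IsRational K x) (hy : IsRational K y) :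
    x ⬝ᵥ y ∈ K :=
  K.sum_mem fun i _ => K.mul_mem (hx i) (hy i)

lemma cross {x y : Fin 3 → L} (hx : IsRational K x) (hy : IsRational K y) :
    IsRational K (x ⨯₃ y) := fun i => by
  fin_cases i <;> exact K.sub_mem (K.mul_mem (hx _) (hy _)) (K.mul_mem (hx _) (hy _))

lemma isProjRational {x : σ → L} (hx : IsRational K x) : IsProjRational K x :=
  ⟨1, x, hx, (one_smul L x).symm⟩

end IsRational

lemma IsProjRational.smul {x : σ → L} (c : L) (hx : IsProjRational K x) :
    IsProjRational K (c • x) := by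
  obtain ⟨a, q, hq, rfl⟩ := hx
  exact ⟨c * a, q, hq, smul_smul c a q⟩

lemma isProjRational_smul_iff {x : σ → L} {c : L} (hc : c ≠ 0) :
    IsProjRational K (c • x) ↔ IsProjRational K x :=
  ⟨fun h => by simpa [smul_smul, hc] using h.smul c⁻¹, fun h => h.smul c⟩

end Rationality

section ConicHull

variable {L : Type*} [Field L] [LinearOrder L] [IsStrictOrderedRing L]
variable {V : Type*} [AddCommGroup V] [Module L V] {ι : Type*} {w : ι → V} {x : V}

lemma mem_hull_range_iff [Fintype ι] : x ∈ PointedCone.hull L (Set.range w) ↔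
    ∃ c : ι → L, (∀ k, 0 ≤ c k) ∧ x = ∑ k, c k • w k := by
  rw [Submodule.mem_span_range_iff_exists_fun]
  constructor
  · rintro ⟨c, rfl⟩
    exact ⟨fun k => c k, fun k => (c k).2, rfl⟩
  · rintro ⟨c, hc, rfl⟩
    exact ⟨fun k => ⟨c k, hc k⟩, rfl⟩

lemma mem_hull_range_self (w : ι → V) (k : ι) : w k ∈ PointedCone.hull L (Set.range w) :=
  PointedCone.subset_hull ⟨k, rfl⟩

lemma exists_nonneg_combination_eq_zero {s : Finset ι} {c : ι → L} (hc : ∀ k ∈ s, 0 ≤ c k)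
    (hs : ¬ LinearIndepOn L w s) :
    ∃ c' : ι → L, (∀ k ∈ s, 0 ≤ c' k) ∧ ∑ k ∈ s, c' k • w k = ∑ k ∈ s, c k • w k ∧
      ∃ k ∈ s, c' k = 0 := by
  obtain ⟨g, hg, k₀, hk₀, hpos⟩ :
      ∃ g : ι → L, ∑ k ∈ s, g k • w k = 0 ∧ ∃ k ∈ s, 0 < g k := by
    obtain ⟨g, hg, k, hk, hne⟩ := not_linearIndepOn_finset_iff.1 hs
    rcases hne.lt_or_gt with h | h
    · exact ⟨-g, by simp [hg], k, hk, neg_pos.2 h⟩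
    · exact ⟨g, hg, k, hk, h⟩
  obtain ⟨k₁, hk₁, hmin⟩ := Finset.exists_min_image (s.filter fun k => 0 < g k)
    (fun k => c k / g k) ⟨k₀, by simp [hk₀, hpos]⟩
  simp only [Finset.mem_filter] at hk₁ hmin
  set t := c k₁ / g k₁ with ht
  have ht₀ : 0 ≤ t := div_nonneg (hc _ hk₁.1) hk₁.2.le
  refine ⟨fun k => c k - t * g k, fun k hk => ?_, ?_, k₁, hk₁.1, ?_⟩
  · rcases lt_or_ge 0 (g k) with h | h
    · exact sub_nonneg.2 ((le_div_iff₀ h).1 (hmin k ⟨hk, h⟩))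
    · linarith [hc k hk, mul_nonneg ht₀ (neg_nonneg.2 h)]
  · simp only [sub_smul, mul_smul, Finset.sum_sub_distrib, ← Finset.smul_sum, hg, smul_zero,
      sub_zero]
  · simp [ht, hk₁.2.ne']

lemma exists_linearIndepOn_of_mem_hull [Finite ι]
    (hx : x ∈ PointedCone.hull L (Set.range w)) :
    ∃ (s : Finset ι) (c : ι → L), LinearIndepOn L w s ∧ (∀ k ∈ s, 0 < c k) ∧
      x = ∑ k ∈ s, c k • w k := by
  classical
  cases nonempty_fintype ι
  cases nonempty_fintype ι
  cases nonempty_fintype ι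
  cases nonempty_fintype ι
  cases nonempty_fintype ι
  suffices H : ∀ (s : Finset ι) (c : ι → L), (∀ k ∈ s, 0 ≤ c k) → x = ∑ k ∈ s, c k • w k →
      ∃ (s : Finset ι) (c : ι → L), LinearIndepOn L w s ∧ (∀ k ∈ s, 0 < c k) ∧
        x = ∑ k ∈ s, c k • w k by
    obtain ⟨c, hc, e⟩ := mem_hull_range_iff.1 hx
    exact H Finset.univ c (fun k _ => hc k) e
  intro s
  induction s using Finset.strongInduction with
  | H s ih =>
    have drop : ∀ c : ι → L, (∀ k ∈ s, 0 ≤ c k) → x = ∑ k ∈ s, c k • w k → (∃ k ∈ s, c k = 0) →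
        ∃ (s : Finset ι) (c : ι → L), LinearIndepOn L w s ∧ (∀ k ∈ s, 0 < c k) ∧
          x = ∑ k ∈ s, c k • w k := by
      rintro c hc e ⟨k, hk, hk0⟩
      refine ih _ (Finset.erase_ssubset hk) c (fun i hi => hc i (Finset.mem_of_mem_erase hi)) ?_
      rw [e, ← Finset.add_sum_erase _ _ hk, hk0, zero_smul, zero_add]
    intro c hc e
    by_cases hs : LinearIndepOn L w s
    · by_cases hz : ∃ k ∈ s, c k = 0
      · exact drop c hc e hz
      · push Not at hz
        exact ⟨s, c, hs, fun k hk => (hc k hk).lt_of_ne (hz k hk).symm, e⟩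
    · obtain ⟨c', hc', e', hz⟩ := exists_nonneg_combination_eq_zero hc hs
      exact drop c' hc' (e.trans e'.symm) hz

end ConicHull

section Density

variable {L : Type*} [Field L] [TopologicalSpace L] {K : Subfield L} {σ : Type*}

lemma exists_isRational_mem (hK : Dense (K : Set L)) {U : Set (σ → L)} (hU : IsOpen U)
    (hne : U.Nonempty) : ∃ q ∈ U, IsRational K q := by
  obtain ⟨q, hqU, hq⟩ :=
    (dense_pi Set.univ fun (_ : σ) _ => hK).inter_open_nonempty U hU hne
  exact ⟨q, hqU, fun i => hq i trivial⟩

lemma continuous_dotProduct_right [IsTopologicalRing L] [Fintype σ] (a : σ → L) :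
    Continuous fun x => a ⬝ᵥ x :=
  continuous_const.dotProduct continuous_id

end Density

section Descent

variable {L : Type*} [Field L] {K : Subfield L} {ι σ : Type*}

lemma coeff_mem_of_linearIndepOn {q : ι → σ → L} {x : σ → L} {s : Finset ι} {c : ι → L}
    (hq : ∀ k, IsRational K (q k)) (hx : IsRational K x) (hs : LinearIndepOn L q s)
    (e : x = ∑ k ∈ s, c k • q k) {k : ι} (hk : k ∈ s) : c k ∈ K := by
  obtain ⟨φ, hφ⟩ := (Algebra.linearMap K L).exists_leftInverse_of_injective
    (LinearMap.ker_eq_bot.2 (algebraMap K L).injective)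
  have hφ_mul : ∀ a : L, ∀ b ∈ K, (φ (a * b) : L) = φ a * b := fun a b hb => by
    have h : a * b = (⟨b, hb⟩ : K) • a := mul_comm a b
    rw [h, map_smul, smul_eq_mul, Subfield.coe_mul, mul_comm]
  have hφ_self : ∀ b ∈ K, (φ b : L) = b := fun b hb =>
    congrArg Subtype.val (LinearMap.congr_fun hφ ⟨b, hb⟩)
  have e' : x = ∑ k ∈ s, (φ (c k) : L) • q k := by
    funext i
    have h := congrArg (fun a => (φ a : L)) (congrFun e i)
    simpa only [hφ_self _ (hx i), Finset.sum_apply, Pi.smul_apply, smul_eq_mul, map_sum,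
      AddSubmonoidClass.coe_finsetSum, hφ_mul _ _ (hq _ i)] using h
  have h0 : ∑ k ∈ s, (c k - φ (c k)) • q k = 0 := by
    simp only [sub_smul, Finset.sum_sub_distrib, ← e, ← e', sub_self]
  rw [sub_eq_zero.1 (linearIndepOn_finset_iff.1 hs _ h0 k hk)]
  exact (φ (c k)).2

lemma exists_coeff_mem_of_mem_hull [LinearOrder L] [IsStrictOrderedRing L] [Fintype ι]
    {q : ι → σ → L} {x : σ → L} (hq : ∀ k, IsRational K (q k)) (hx : IsRational K x)
    (h : x ∈ PointedCone.hull L (Set.range q)) :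
    ∃ c : ι → L, (∀ k, 0 ≤ c k) ∧ (∀ k, c k ∈ K) ∧ x = ∑ k, c k • q k := by
  classical
  obtain ⟨s, c, hs, hc, e⟩ := exists_linearIndepOn_of_mem_hull h
  refine ⟨fun k => if k ∈ s then c k else 0, fun k => ?_, fun k => ?_, ?_⟩
  · dsimp only
    split_ifs with hk
    exacts [(hc k hk).le, le_rfl]
  · dsimp only
    split_ifs with hk
    exacts [coeff_mem_of_linearIndepOn hq hx hs e hk, K.zero_mem]
  · simpa [ite_smul] using e

end Descent

/-- A pair of nested polyhedral cones defined over the subfield `K`: the outer cone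
`{x | ∀ i, 0 ≤ ineq i ⬝ᵥ x}` and the inner full-dimensional cone generated by the vectors `gen j`.
The cross-sections of the two cones are the nested polytopes of the geometric form of restricted
nonnegative factorization. -/
structure NestedConeProblem {L : Type*} [Field L] (K : Subfield L) (ρ γ σ : Type*) where
  ineq : ρ → σ → L
  gen : γ → σ → L
  ineq_rational : ∀ i, IsRational K (ineq i)
  gen_rational : ∀ j, IsRational K (gen j)
  span_gen : Submodule.span L (Set.range gen) = ⊤

namespace NestedConeProblem

section Normals

variable {L : Type*} [Field L] {K : Subfield L} {ρ γ σ : Type*} [Fintype σ]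
  {P : NestedConeProblem K ρ γ σ}

/-- The vector `n` is the normal of a facet inequality of the outer cone that is tight at `x`. -/
structure IsNormalAt (P : NestedConeProblem K ρ γ σ) (n x : σ → L) : Prop where
  mem : n ∈ Set.range P.ineq
  ne_zero : n ≠ 0
  dotProduct_eq_zero : n ⬝ᵥ x = 0

lemma IsNormalAt.isRational {n x : σ → L} (h : P.IsNormalAt n x) : IsRational K n := by
  obtain ⟨i, rfl⟩ := h.mem
  exact P.ineq_rational i

lemma IsNormalAt.dotProduct_nonneg [LinearOrder L] {n x y : σ → L} (h : P.IsNormalAt n x)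
    (hy : ∀ i, 0 ≤ P.ineq i ⬝ᵥ y) : 0 ≤ n ⬝ᵥ y := by
  obtain ⟨i, rfl⟩ := h.mem
  exact hy i

end Normals

section Solutions

variable {L : Type*} [Field L] [LinearOrder L] [IsStrictOrderedRing L] {K : Subfield L}
  {ρ γ ι σ : Type*} [Fintype σ] {P : NestedConeProblem K ρ γ σ} {w : ι → σ → L}

variable (P w) in
/-- The vectors `w k` generate a cone lying between the inner and the outer cone. -/
structure IsSolution : Prop where
  nonneg : ∀ i k, 0 ≤ P.ineq i ⬝ᵥ w k
  mem : ∀ j, P.gen j ∈ PointedCone.hull L (Set.range w)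

variable (P w) in
/-- A solution whose set of projectively rational generators is maximal for inclusion. -/
structure IsMaxSolution : Prop extends P.IsSolution w where
  maximal : ∀ w', P.IsSolution w' → (∀ k, IsProjRational K (w k) → IsProjRational K (w' k)) →
    ∀ k, IsProjRational K (w' k) → IsProjRational K (w k)

lemma IsSolution.span_eq_top (hw : P.IsSolution w) : Submodule.span L (Set.range w) = ⊤ :=
  top_unique <| P.span_gen.symm.trans_le <| Submodule.span_le.2 <| by
    rintro _ ⟨j, rfl⟩
    exact PointedCone.hull_le_span L _ (hw.mem j)

lemma IsSolution.of_mem_hull {κ : Type*} {w' : κ → σ → L} (hw : P.IsSolution w)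
    (hw' : ∀ i k, 0 ≤ P.ineq i ⬝ᵥ w' k) (h : ∀ k, w k ∈ PointedCone.hull L (Set.range w')) :
    P.IsSolution w' :=
  ⟨hw', fun j => Submodule.span_le.2 (Set.range_subset_iff.2 h) (hw.mem j)⟩

lemma exists_isMaxSolution [Finite ι] (hw : P.IsSolution w) :
    ∃ w' : ι → σ → L, P.IsMaxSolution w' := by
  obtain ⟨w', h, hmax⟩ := Set.Finite.exists_maximalFor'
    (fun w : ι → σ → L => {k | IsProjRational K (w k)}) {w | P.IsSolution w}
    (Set.toFinite _) ⟨w, hw⟩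
  exact ⟨w', h, fun w'' h'' hle k hk => hmax h'' hle hk⟩

lemma IsMaxSolution.notMem_hull_insert (hw : P.IsMaxSolution w) {k : ι}
    (hk : ¬ IsProjRational K (w k)) {x : σ → L} (hx : IsProjRational K x)
    (hxP : ∀ i, 0 ≤ P.ineq i ⬝ᵥ x) : w k ∉ PointedCone.hull L (insert x (w '' {k}ᶜ)) := by
  classical
  intro hmem
  have hsub : insert x (w '' {k}ᶜ) ⊆ Set.range (Function.update w k x) := by
    rintro _ (rfl | ⟨i, hi, rfl⟩)
    exacts [⟨k, by simp⟩, ⟨i, Function.update_of_ne hi _ _⟩]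
  have hsol : P.IsSolution (Function.update w k x) := by
    refine hw.toIsSolution.of_mem_hull (fun i j => ?_) fun j => ?_
    · rcases eq_or_ne j k with rfl | hj
      · simpa using hxP i
      · simpa [hj] using hw.nonneg i j
    · rcases eq_or_ne j k with rfl | hj
      · exact Submodule.span_mono hsub hmem
      · exact PointedCone.subset_hull (hsub (.inr ⟨j, hj, rfl⟩))
  refine hk (hw.maximal _ hsol (fun j hj => ?_) k (by simpa using hx))
  rcases eq_or_ne j k with rfl | hne
  · simpa using hx
  · simpa [hne] using hj

lemma IsMaxSolution.notMem_hull_image_compl (hw : P.IsMaxSolution w) {k : ι}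
    (hk : ¬ IsProjRational K (w k)) : w k ∉ PointedCone.hull L (w '' {k}ᶜ) := fun h =>
  hw.notMem_hull_insert hk IsRational.zero.isProjRational (by simp)
    (Submodule.span_mono (Set.subset_insert _ _) h)

lemma exists_isRational_isSolution (hw : P.IsSolution w) (hr : ∀ k, IsProjRational K (w k)) :
    ∃ q : ι → σ → L, (∀ k, IsRational K (q k)) ∧ P.IsSolution q := by
  have key : ∀ k, ∃ (a : L) (q : σ → L), 0 ≤ a ∧ IsRational K q ∧ w k = a • q ∧
      (a = 0 → q = 0) := fun k => by
    obtain ⟨c, q, hq, e⟩ := hr k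
    rcases lt_trichotomy c 0 with h | rfl | h
    · exact ⟨-c, -q, (neg_pos.2 h).le, fun i => K.neg_mem (hq i), by simp [e],
        fun h0 => absurd (neg_eq_zero.1 h0) h.ne⟩
    · exact ⟨0, 0, le_rfl, IsRational.zero, by simp [e], fun _ => rfl⟩
    · exact ⟨c, q, h.le, hq, e, fun h0 => absurd h0 h.ne'⟩
  choose a q ha hq e h0 using key
  refine ⟨q, hq, hw.of_mem_hull (fun i k => ?_) fun k => ?_⟩
  · rcases (ha k).eq_or_lt with h | h
    · simp [h0 k h.symm]
    · have hwk := hw.nonneg i k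
      rw [e k, dotProduct_smul, smul_eq_mul] at hwk
      exact nonneg_of_mul_nonneg_right hwk h
  · rw [e k]
    exact PointedCone.smul_mem _ (ha k) (mem_hull_range_self q k)

end Solutions

section Boundary

variable {L : Type*} [Field L] [LinearOrder L] [IsStrictOrderedRing L] [TopologicalSpace L]
  [OrderTopology L] {K : Subfield L} {ρ γ ι σ : Type*} [Fintype σ] [Finite ρ]
  {P : NestedConeProblem K ρ γ σ}

lemma isOpen_setOf_forall_ineq_pos :
    IsOpen {x | ∀ i, P.ineq i ≠ 0 → 0 < P.ineq i ⬝ᵥ x} := by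
  simp only [Set.ofPred_forall]
  exact isOpen_iInter_of_finite fun i => isOpen_iInter_of_finite fun _ =>
    isOpen_lt continuous_const (continuous_dotProduct_right _)

variable [Finite ι] {w : ι → σ → L}

/- Subtracting from `w k` a small positive combination of all generators keeps it in the interior,
and the vectors reached in this way form an open set; a rational one could replace `w k`. -/
lemma IsMaxSolution.exists_isNormalAt (hw : P.IsMaxSolution w) (hK : Dense (K : Set L)) {k : ι}
    (hk : ¬ IsProjRational K (w k)) : ∃ n, P.IsNormalAt n (w k) := by
  classical
  cases nonempty_fintype ι
  by_contra! hcon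
  set V := {x | ∀ i, P.ineq i ≠ 0 → 0 < P.ineq i ⬝ᵥ x}
  have hV : IsOpen V := isOpen_setOf_forall_ineq_pos
  have hkV : w k ∈ V := fun i hi =>
    (hw.nonneg i k).lt_of_ne fun h => hcon _ ⟨⟨i, rfl⟩, hi, h.symm⟩
  set Φ := Fintype.linearCombination L w
  have hΦ : Function.Surjective Φ := LinearMap.range_eq_top.1 <| by
    rw [Fintype.range_linearCombination, hw.span_eq_top]
  have hcont : Continuous fun c => w k - Φ c :=
    continuous_const.sub (LinearMap.continuous_on_pi Φ)
  have hopen : IsOpenMap fun c => w k - Φ c :=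
    (Homeomorph.subLeft (w k)).isOpenMap.comp (IsModuleTopology.isOpenMap_of_surjective hΦ)
  set U : Set (ι → L) := (Set.univ.pi fun _ => Set.Ioo 0 1) ∩ (fun c => w k - Φ c) ⁻¹' V
  have hU : IsOpen U :=
    (isOpen_set_pi Set.finite_univ fun _ _ => isOpen_Ioo).inter (hV.preimage hcont)
  have hne : U.Nonempty := by
    have hpath : ∀ᶠ ε : L in 𝓝[>] 0, w k - Φ (fun _ => ε) ∈ V :=
      (hcont.comp (by fun_prop : Continuous fun (ε : L) (_ : ι) => ε)).continuousAt.eventually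
        (hV.mem_nhds (by simpa [← Pi.zero_def] using hkV)) |>.filter_mono nhdsWithin_le_nhds
    obtain ⟨ε, hε, hε'⟩ := (hpath.and (Ioo_mem_nhdsGT one_pos)).exists
    exact ⟨fun _ => ε, fun _ _ => hε', hε⟩
  obtain ⟨_, ⟨c, ⟨hc, hcV⟩, rfl⟩, hq⟩ := exists_isRational_mem hK (hopen U hU) (hne.image _)
  refine hw.notMem_hull_insert hk hq.isProjRational (fun i => ?_) ?_
  · rcases eq_or_ne (P.ineq i) 0 with h | h
    · simp [h]
    · exact (hcV i h).le
  · have hck : 0 < 1 - c k := sub_pos.2 (hc k trivial).2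
    have e : w k = (1 - c k)⁻¹ • ((w k - Φ c) + ∑ i ∈ Finset.univ.erase k, c i • w i) := by
      rw [eq_inv_smul_iff₀ hck.ne', Fintype.linearCombination_apply,
        ← Finset.add_sum_erase _ _ (Finset.mem_univ k), sub_smul, one_smul]
      abel
    refine Set.mem_of_eq_of_mem e <|
      PointedCone.smul_mem _ (inv_nonneg.2 hck.le) (add_mem ?_ (sum_mem fun i hi => ?_))
    · exact PointedCone.subset_hull (Set.mem_insert _ _)
    · exact PointedCone.smul_mem _ (hc i trivial).1.le <| PointedCone.subset_hull <|
        .inr ⟨i, Finset.ne_of_mem_erase hi, rfl⟩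

end Boundary

end NestedConeProblem

section TripleProduct

variable {R : Type*} [CommRing R] (a b c : Fin 3 → R)

lemma cross_dotProduct_self_left : a ⨯₃ b ⬝ᵥ a = 0 := by
  rw [dotProduct_comm, dot_self_cross]

lemma cross_dotProduct_self_right : a ⨯₃ b ⬝ᵥ b = 0 := by
  rw [dotProduct_comm, dot_cross_self]

lemma cross_dotProduct_swap : b ⨯₃ a ⬝ᵥ c = -(a ⨯₃ b ⬝ᵥ c) := by
  rw [← cross_anticomm, neg_dotProduct]

lemma cross_dotProduct_rotate : a ⨯₃ b ⬝ᵥ c = b ⨯₃ c ⬝ᵥ a := by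
  rw [dotProduct_comm, triple_product_permutation, dotProduct_comm]

lemma cross_dotProduct_add_smul (α β : R) : a ⨯₃ b ⬝ᵥ (α • a + β • b) = 0 := by
  simp only [dotProduct_add, dotProduct_smul, cross_dotProduct_self_left,
    cross_dotProduct_self_right, smul_zero, add_zero]

end TripleProduct

section Cross

variable {L : Type*} [Field L]

lemma cross_dotProduct_smul_eq (a b e x : Fin 3 → L) :
    (a ⨯₃ b ⬝ᵥ e) • x = (x ⨯₃ b ⬝ᵥ e) • a + (a ⨯₃ x ⬝ᵥ e) • b + (a ⨯₃ b ⬝ᵥ x) • e := by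
  ext i
  simp only [cross_apply, vec3_dotProduct, Pi.add_apply, Pi.smul_apply, smul_eq_mul]
  fin_cases i <;> simp only [Fin.zero_eta, Fin.mk_one, Fin.reduceFinMk, cons_val] <;> ring

lemma exists_eq_smul_of_cross_eq_zero {a b : Fin 3 → L} (ha : a ≠ 0) (h : a ⨯₃ b = 0) :
    ∃ s : L, b = s • a := by
  have := mt (crossProduct_ne_zero_iff_linearIndependent (v := a) (w := b)).2 (not_not.2 h)
  simpa [LinearIndependent.pair_iff' ha, eq_comm] using this

lemma exists_eq_add_of_cross_dotProduct_eq_zero {u v x : Fin 3 → L} (huv : u ⨯₃ v ≠ 0)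
    (hx : u ⨯₃ v ⬝ᵥ x = 0) : ∃ α β : L, x = α • u + β • v := by
  obtain ⟨e, he⟩ : ∃ e, u ⨯₃ v ⬝ᵥ e ≠ 0 := by
    by_contra! h
    exact huv (dotProduct_eq_zero _ h)
  refine ⟨(u ⨯₃ v ⬝ᵥ e)⁻¹ * (x ⨯₃ v ⬝ᵥ e), (u ⨯₃ v ⬝ᵥ e)⁻¹ * (u ⨯₃ x ⬝ᵥ e), ?_⟩
  rw [mul_smul, mul_smul, ← smul_add, eq_inv_smul_iff₀ he, cross_dotProduct_smul_eq, hx, zero_smul,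
    add_zero]

lemma exists_cross_eq_smul {n a b : Fin 3 → L} (hn : n ≠ 0) (ha : n ⬝ᵥ a = 0) (hb : n ⬝ᵥ b = 0) :
    ∃ s : L, a ⨯₃ b = s • n := by
  refine exists_eq_smul_of_cross_eq_zero hn ?_
  rw [cross_cross_eq_smul_sub_smul', hb, dotProduct_comm, ha, zero_smul, zero_smul, sub_zero]

lemma cross_dotProduct_smul_eq_of_dotProduct_eq_zero {n a b x : Fin 3 → L} (hn : n ≠ 0)
    (ha : n ⬝ᵥ a = 0) (hb : n ⬝ᵥ b = 0) (hx : n ⬝ᵥ x = 0) :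
    (a ⨯₃ b ⬝ᵥ n) • x = (x ⨯₃ b ⬝ᵥ n) • a + (a ⨯₃ x ⬝ᵥ n) • b := by
  obtain ⟨s, hs⟩ := exists_cross_eq_smul hn ha hb
  rw [cross_dotProduct_smul_eq a b n x, hs, smul_dotProduct s n x, hx, smul_zero, zero_smul,
    add_zero]

variable {K : Subfield L} {n w : Fin 3 → L}

lemma exists_eq_smul_of_dotProduct_eq_zero {l : Fin 3 → L} (hn : IsRational K n)
    (hl : IsRational K l) (hn0 : n ≠ 0) (hw : ¬ IsProjRational K w) (hnw : n ⬝ᵥ w = 0)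
    (hlw : l ⬝ᵥ w = 0) : ∃ s : L, l = s • n := by
  refine exists_eq_smul_of_cross_eq_zero hn0 (by_contra fun hnl => hw ?_)
  have hpar : (n ⨯₃ l) ⨯₃ w = 0 := by
    rw [cross_cross_eq_smul_sub_smul, hnw, hlw, zero_smul, zero_smul, sub_zero]
  obtain ⟨s, rfl⟩ := exists_eq_smul_of_cross_eq_zero hnl hpar
  exact (hn.cross hl).isProjRational.smul s

end Cross

section Pencil

variable {L : Type*} [Field L] [LinearOrder L] [IsStrictOrderedRing L] {K : Subfield L}
  {n w : Fin 3 → L}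

lemma exists_isRational_cross_eq (hn : IsRational K n) (hn0 : n ≠ 0) :
    ∃ u v : Fin 3 → L, IsRational K u ∧ IsRational K v ∧ u ⨯₃ v = n := by
  obtain ⟨i, hi⟩ : ∃ i : Fin 3, n ⨯₃ Pi.single i 1 ≠ 0 := by
    by_contra! h
    refine hn0 (funext fun i => ?_)
    fin_cases i
    · simpa [cross_apply] using congrFun (h 1) 2
    · simpa [cross_apply] using congrFun (h 0) 2
    · simpa [cross_apply] using congrFun (h 0) 1
  set u := n ⨯₃ Pi.single i 1
  have hu : IsRational K u := hn.cross (.single i)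
  have huu : u ⬝ᵥ u ≠ 0 := dotProduct_self_eq_zero.not.2 hi
  have hun : n ⬝ᵥ u = 0 := dot_self_cross _ _
  refine ⟨u, (u ⬝ᵥ u)⁻¹ • (n ⨯₃ u), hu,
    (hn.cross hu).smul (K.inv_mem (hu.dotProduct_mem hu)), ?_⟩
  rw [map_smul, ← cross_anticomm, cross_cross_eq_smul_sub_smul, hun, zero_smul, zero_sub, neg_neg,
    inv_smul_smul₀ huu]

lemma exists_pencil (hn : IsRational K n) (hn0 : n ≠ 0) (hw : ¬ IsProjRational K w)
    (hnw : n ⬝ᵥ w = 0) : ∃ (u v : Fin 3 → L) (a t : L), IsRational K u ∧ IsRational K v ∧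
      u ⨯₃ v = n ∧ a ≠ 0 ∧ t ∉ K ∧ w = a • (u + t • v) := by
  obtain ⟨u, v, hu, hv, rfl⟩ := exists_isRational_cross_eq hn hn0
  obtain ⟨α, β, rfl⟩ := exists_eq_add_of_cross_dotProduct_eq_zero hn0 hnw
  have hα : α ≠ 0 := by
    rintro rfl
    exact hw ⟨β, v, hv, by simp⟩
  have e : α • u + β • v = α • (u + (β / α) • v) := by
    rw [smul_add, smul_smul, mul_div_cancel₀ _ hα]
  exact ⟨u, v, α, β / α, hu, hv, rfl, hα, fun ht => hw ⟨α, _, hu.add (hv.smul ht), e⟩, e⟩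

lemma eq_zero_of_add_mul_eq_zero {A B t : L} (hA : A ∈ K) (hB : B ∈ K) (ht : t ∉ K)
    (h : A + B * t = 0) : B = 0 := by
  by_contra hB0
  refine ht ?_
  rw [show t = -A / B by field_simp; linear_combination h]
  exact K.div_mem (K.neg_mem hA) hB

variable [TopologicalSpace L] [OrderTopology L]

lemma exists_mem_subfield_side (hK : Dense (K : Set L)) {σ t : L} (hσ : σ ≠ 0) {p : L → Prop}
    (hp : ∀ᶠ q in 𝓝 t, p q) : ∃ q ∈ K, p q ∧ 0 < σ * (q - t) := by
  obtain ⟨U, hU, hUo, htU⟩ := eventually_nhds_iff.1 hp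
  have hpath : ∀ᶠ ε : L in 𝓝[>] 0, t + σ * ε ∈ U :=
    ((by fun_prop : Continuous fun ε : L => t + σ * ε).continuousAt.eventually
      (hUo.mem_nhds (by simpa using htU))).filter_mono nhdsWithin_le_nhds
  obtain ⟨ε, hεU, hε⟩ := (hpath.and self_mem_nhdsWithin).exists
  have hside : IsOpen {q : L | 0 < σ * (q - t)} := isOpen_lt continuous_const (by fun_prop)
  have hmem : 0 < σ * (t + σ * ε - t) := by
    rw [show σ * (t + σ * ε - t) = σ ^ 2 * ε by ring]
    exact mul_pos (by positivity) hε
  obtain ⟨q, ⟨hqU, hq⟩, hqK⟩ :=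
    hK.inter_open_nonempty _ (hUo.inter hside) ⟨t + σ * ε, hεU, hmem⟩
  exact ⟨q, hqK, hU q hqU, hq⟩

/- With `D` the derivative of the polynomial at its root `t`, the value at `q` has the sign of
`D * (q - t)` near `t`, and `D = 0` forces all coefficients to vanish. -/
lemma exists_mem_subfield_quadratic_nonneg (hK : Dense (K : Set L)) {A B C t : L} (hA : A ∈ K)
    (hB : B ∈ K) (ht : t ∉ K) (h0 : A * t ^ 2 + B * t + C = 0) {p : L → Prop}
    (hp : ∀ᶠ q in 𝓝 t, p q) : ∃ q ∈ K, p q ∧ 0 ≤ A * q ^ 2 + B * q + C := by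
  set D := B + 2 * A * t with hD
  rcases eq_or_ne D 0 with hz | hz
  · have hA0 : A = 0 := by
      have h2 := eq_zero_of_add_mul_eq_zero hB (K.mul_mem (ofNat_mem K 2) hA) ht hz
      simpa using h2
    have hB0 : B = 0 := by simpa [hD, hA0] using hz
    obtain ⟨q, hq, hpq, -⟩ := exists_mem_subfield_side hK one_ne_zero hp
    exact ⟨q, hq, hpq, by simpa [hA0, hB0] using h0.ge⟩
  · have hnear : ∀ᶠ q in 𝓝 t, 0 < D * (A * (q + t) + B) := by
      refine (by fun_prop : Continuous fun q => D * (A * (q + t) + B)).continuousAt.eventually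
        (lt_mem_nhds ?_)
      change 0 < D * (A * (t + t) + B)
      rw [show D * (A * (t + t) + B) = D ^ 2 by rw [hD]; ring]
      positivity
    obtain ⟨q, hq, ⟨hpq, h1⟩, h2⟩ := exists_mem_subfield_side hK hz (hp.and hnear)
    refine ⟨q, hq, hpq, ?_⟩
    have h3 : D ^ 2 * (A * q ^ 2 + B * q + C) = D * (A * (q + t) + B) * (D * (q - t)) := by
      linear_combination D ^ 2 * h0
    exact (pos_of_mul_pos_right (h3 ▸ mul_pos h1 h2) (sq_nonneg D)).le

lemma exists_isProjRational_side (hK : Dense (K : Set L)) (hn : IsRational K n) (hn0 : n ≠ 0)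
    (hw : ¬ IsProjRational K w) (hnw : n ⬝ᵥ w = 0) {σ : L} (hσ : σ ≠ 0)
    {p : (Fin 3 → L) → Prop} (hp : ∀ᶠ x in 𝓝 w, p x) :
    ∃ (x : Fin 3 → L) (s : L), IsProjRational K x ∧ n ⬝ᵥ x = 0 ∧ p x ∧ w ⨯₃ x = s • n ∧
      0 < σ * s := by
  obtain ⟨u, v, a, t, hu, hv, rfl, ha, -, rfl⟩ := exists_pencil hn hn0 hw hnw
  obtain ⟨q, hq, hpq, hside⟩ := exists_mem_subfield_side hK hσ
    ((by fun_prop : Continuous fun q : L => a • (u + q • v)).continuousAt.eventually hp)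
  refine ⟨a • (u + q • v), a ^ 2 * (q - t), ⟨a, _, hu.add (hv.smul hq), rfl⟩,
    by simp only [smul_add, smul_smul, cross_dotProduct_add_smul], hpq, ?_, ?_⟩
  · simp only [map_smul, map_add, LinearMap.smul_apply, LinearMap.add_apply, cross_self,
      smul_zero, add_zero, zero_add, ← cross_anticomm u v]
    module
  · rw [mul_left_comm]
    exact mul_pos (by positivity) hside

lemma exists_isProjRational_quadratic_nonneg (hK : Dense (K : Set L)) (hn : IsRational K n)
    (hn0 : n ≠ 0) (hw : ¬ IsProjRational K w) (hnw : n ⬝ᵥ w = 0)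
    {T : (Fin 3 → L) →ₗ[L] Fin 3 → L} (hT : ∀ x, IsRational K x → IsRational K (T x))
    {z : Fin 3 → L} (hz : IsRational K z) (h0 : T w ⨯₃ w ⬝ᵥ z = 0)
    {p : (Fin 3 → L) → Prop} (hp : ∀ᶠ x in 𝓝 w, p x) :
    ∃ x, IsProjRational K x ∧ n ⬝ᵥ x = 0 ∧ p x ∧ 0 ≤ T x ⨯₃ x ⬝ᵥ z := by
  obtain ⟨u, v, a, t, hu, hv, rfl, ha, ht, rfl⟩ := exists_pencil hn hn0 hw hnw
  set Q : (Fin 3 → L) → (Fin 3 → L) → L := fun x y => T x ⨯₃ y ⬝ᵥ z with hQdef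
  have hQ : ∀ x y, IsRational K x → IsRational K y → Q x y ∈ K := fun x y hx hy =>
    ((hT x hx).cross hy).dotProduct_mem hz
  have key : ∀ q : L, T (a • (u + q • v)) ⨯₃ (a • (u + q • v)) ⬝ᵥ z =
      a ^ 2 * (Q v v * q ^ 2 + (Q u v + Q v u) * q + Q u u) := fun q => by
    simp only [hQdef, map_smul, map_add, LinearMap.smul_apply, LinearMap.add_apply,
      smul_dotProduct, add_dotProduct, smul_eq_mul]
    ring
  rw [key, mul_eq_zero, or_iff_right (by positivity)] at h0
  obtain ⟨q, hq, hpq, hnonneg⟩ := exists_mem_subfield_quadratic_nonneg hK (hQ v v hv hv)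
    (K.add_mem (hQ u v hu hv) (hQ v u hv hu)) ht h0
    ((by fun_prop : Continuous fun q : L => a • (u + q • v)).continuousAt.eventually hp)
  refine ⟨a • (u + q • v), ⟨a, _, hu.add (hv.smul hq), rfl⟩,
    by simp only [smul_add, smul_smul, cross_dotProduct_add_smul], hpq, ?_⟩
  rw [key]
  exact mul_nonneg (sq_nonneg a) hnonneg

end Pencil

section Support

variable {L : Type*} [Field L] {ι : Type*} {w : ι → Fin 3 → L}

lemma eq_zero_of_forall_dotProduct_eq_zero {σ : Type*} [Fintype σ] {w : ι → σ → L}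
    (hw : Submodule.span L (Set.range w) = ⊤) {n : σ → L} (h : ∀ i, n ⬝ᵥ w i = 0) : n = 0 := by
  refine dotProduct_eq_zero n fun x => ?_
  have hx : x ∈ Submodule.span L (Set.range w) := hw ▸ Submodule.mem_top
  induction hx using Submodule.span_induction with
  | mem x hx => obtain ⟨i, rfl⟩ := hx; exact h i
  | zero => exact dotProduct_zero n
  | add x y _ _ hx hy => rw [dotProduct_add, hx, hy, add_zero]
  | smul a x _ hx => rw [dotProduct_smul, hx, smul_zero]

lemma cross_ne_zero_of_linearIndepOn_pair {a b : ι} (hab : a ≠ b)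
    (h : LinearIndepOn L w {a, b}) : w a ⨯₃ w b ≠ 0 := by
  rw [crossProduct_ne_zero_iff_linearIndependent, LinearIndependent.pair_iff]
  exact (LinearIndepOn.pair_iff w hab).1 h

lemma cross_dotProduct_ne_zero_of_linearIndepOn {a b e : ι} (hab : a ≠ b) (hae : a ≠ e)
    (hbe : b ≠ e) (h : LinearIndepOn L w {a, b, e}) : w a ⨯₃ w b ⬝ᵥ w e ≠ 0 := by
  intro h0
  have hset : ({a, b, e} : Set ι) = insert e {a, b} := by
    ext
    simp only [Set.mem_insert_iff, Set.mem_singleton_iff]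
    tauto
  rw [hset, linearIndepOn_insert (by simp [hae.symm, hbe.symm])] at h
  obtain ⟨α, β, e'⟩ := exists_eq_add_of_cross_dotProduct_eq_zero
    (cross_ne_zero_of_linearIndepOn_pair hab h.1) h0
  refine h.2 ?_
  rw [Set.image_pair, Submodule.mem_span_pair]
  exact ⟨α, β, e'.symm⟩

lemma card_le_three_of_linearIndepOn {s : Finset ι} (hs : LinearIndepOn L w s) : s.card ≤ 3 := by
  simpa using hs.fintype_card_le_finrank

variable [LinearOrder L] [IsStrictOrderedRing L] [Finite ι] {x : Fin 3 → L}

lemma mem_hull_range_fin_three_cases (hx : x ∈ PointedCone.hull L (Set.range w)) :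
    x = 0 ∨ (∃ (k : ι) (α : L), 0 < α ∧ x = α • w k) ∨
    (∃ (k l : ι) (α β : L), w k ⨯₃ w l ≠ 0 ∧ 0 < α ∧ 0 < β ∧ x = α • w k + β • w l) ∨
    ∃ (a b e : ι) (α β γ : L), 0 < w a ⨯₃ w b ⬝ᵥ w e ∧ 0 < α ∧ 0 < β ∧ 0 < γ ∧
      x = α • w a + β • w b + γ • w e := by
  classical
  cases nonempty_fintype ι
  obtain ⟨s, c, hs, hc, rfl⟩ := exists_linearIndepOn_of_mem_hull hx
  have hcard := card_le_three_of_linearIndepOn hs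
  interval_cases h : s.card
  · rw [Finset.card_eq_zero] at h
    subst h
    exact .inl Finset.sum_empty
  · obtain ⟨k, rfl⟩ := Finset.card_eq_one.1 h
    exact .inr <| .inl ⟨k, c k, hc k (by simp), Finset.sum_singleton _ _⟩
  · obtain ⟨k, l, hkl, rfl⟩ := Finset.card_eq_two.1 h
    exact .inr <| .inr <| .inl ⟨k, l, c k, c l,
      cross_ne_zero_of_linearIndepOn_pair hkl (by simpa using hs), hc k (by simp), hc l (by simp),
      Finset.sum_pair hkl⟩
  · obtain ⟨a, b, e, hab, hae, hbe, rfl⟩ := Finset.card_eq_three.1 h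
    have ha := hc a (by simp)
    have hb := hc b (by simp)
    have he := hc e (by simp)
    have hsum : ∑ k ∈ {a, b, e}, c k • w k = c a • w a + c b • w b + c e • w e := by
      rw [Finset.sum_insert (by simp [hab, hae]), Finset.sum_pair hbe, add_assoc]
    refine .inr <| .inr <| .inr ?_
    rcases (cross_dotProduct_ne_zero_of_linearIndepOn hab hae hbe (by simpa using hs)).lt_or_gt
      with hD | hD
    · refine ⟨b, a, e, c b, c a, c e, ?_, hb, ha, he, by rw [hsum, add_comm (c b • w b)]⟩
      rwa [cross_dotProduct_swap, neg_pos]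
    · exact ⟨a, b, e, c a, c b, c e, hD, ha, hb, he, hsum⟩

end Support

/-- The vector `x` lies in the relative interior of the two-dimensional face spanned by `w k` and
`w l` of the cone generated by `w`, and `w k` precedes `w l` in the orientation of its boundary. -/
structure IsEdge {L : Type*} [CommRing L] [PartialOrder L] {ι : Type*} (w : ι → Fin 3 → L) (k l : ι)
    (x : Fin 3 → L) : Prop where
  cross_ne_zero : w k ⨯₃ w l ≠ 0
  exists_pos : ∃ α β : L, 0 < α ∧ 0 < β ∧ x = α • w k + β • w l
  nonneg : ∀ i, 0 ≤ w k ⨯₃ w l ⬝ᵥ w i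

lemma IsEdge.cross_ne_zero_symm {L : Type*} [CommRing L] [PartialOrder L] {ι : Type*}
    {w : ι → Fin 3 → L} {k l : ι} {x : Fin 3 → L} (h : IsEdge w k l x) : w l ⨯₃ w k ≠ 0 := by
  rw [← cross_anticomm, neg_ne_zero]
  exact h.cross_ne_zero

section Perturbation

variable {L : Type*} [Field L] [LinearOrder L] [IsStrictOrderedRing L] [TopologicalSpace L]
  [OrderTopology L] {ι : Type*} {w : ι → Fin 3 → L} {x : Fin 3 → L}

lemma continuous_cross_dotProduct {X : Type*} [TopologicalSpace X] {a b c : X → Fin 3 → L}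
    (ha : Continuous a) (hb : Continuous b) (hc : Continuous c) :
    Continuous fun t => a t ⨯₃ b t ⬝ᵥ c t := by
  simp only [cross_apply, vec3_dotProduct, cons_val]
  fun_prop

lemma eventually_mem_hull_of_cross_nonneg [Finite ι] {a b e : ι} {α β γ : L} (hα : 0 < α)
    (hβ : 0 < β) (hx : x = α • w a + β • w b + γ • w e) (hD : 0 < w a ⨯₃ w b ⬝ᵥ w e) :
    ∀ᶠ w' in 𝓝 w, 0 ≤ w' a ⨯₃ w' b ⬝ᵥ x → x ∈ PointedCone.hull L (Set.range w') := by
  cases nonempty_fintype ι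
  have near : ∀ {f : (ι → Fin 3 → L) → L}, Continuous f → 0 < f w → ∀ᶠ w' in 𝓝 w, 0 < f w' :=
    fun hf h => hf.continuousAt.eventually (lt_mem_nhds h)
  have ha : 0 < x ⨯₃ w b ⬝ᵥ w e := by
    have : x ⨯₃ w b ⬝ᵥ w e = α * (w a ⨯₃ w b ⬝ᵥ w e) := by
      simp [hx, cross_dotProduct_self_left]
    rw [this]
    positivity
  have hb : 0 < w a ⨯₃ x ⬝ᵥ w e := by
    have : w a ⨯₃ x ⬝ᵥ w e = β * (w a ⨯₃ w b ⬝ᵥ w e) := by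
      simp [hx, cross_dotProduct_self_right]
    rw [this]
    positivity
  filter_upwards [near (f := fun w' => w' a ⨯₃ w' b ⬝ᵥ w' e)
      (continuous_cross_dotProduct (by fun_prop) (by fun_prop) (by fun_prop)) hD,
    near (f := fun w' => x ⨯₃ w' b ⬝ᵥ w' e)
      (continuous_cross_dotProduct (by fun_prop) (by fun_prop) (by fun_prop)) ha,
    near (f := fun w' => w' a ⨯₃ x ⬝ᵥ w' e)
      (continuous_cross_dotProduct (by fun_prop) (by fun_prop) (by fun_prop)) hb]
    with w' hD' ha' hb' he'
  have hx' := (eq_inv_smul_iff₀ hD'.ne').2 (cross_dotProduct_smul_eq (w' a) (w' b) (w' e) x)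
  refine Set.mem_of_eq_of_mem hx' <| PointedCone.smul_mem _ (inv_nonneg.2 hD'.le) <|
    add_mem (add_mem ?_ ?_) ?_
  exacts [PointedCone.smul_mem _ ha'.le (mem_hull_range_self w' a),
    PointedCone.smul_mem _ hb'.le (mem_hull_range_self w' b),
    PointedCone.smul_mem _ he' (mem_hull_range_self w' e)]

lemma eventually_mem_hull_of_pair [Finite ι] (hw : Submodule.span L (Set.range w) = ⊤)
    {k l : ι} {α β : L} (hkl : w k ⨯₃ w l ≠ 0) (hα : 0 < α) (hβ : 0 < β)
    (hx : x = α • w k + β • w l) :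
    ∀ᶠ w' in 𝓝 w, (∀ k l, IsEdge w k l x → 0 ≤ w' k ⨯₃ w' l ⬝ᵥ x) →
      x ∈ PointedCone.hull L (Set.range w') := by
  have hx' : x = β • w l + α • w k := hx.trans (add_comm _ _)
  have hlk : w l ⨯₃ w k ≠ 0 := by rwa [← cross_anticomm, neg_ne_zero]
  by_cases h₁ : ∃ i, 0 < w k ⨯₃ w l ⬝ᵥ w i
  · obtain ⟨i, hi⟩ := h₁
    have near := eventually_mem_hull_of_cross_nonneg (γ := 0) hα hβ (by simpa using hx) hi
    by_cases h₂ : ∃ j, 0 < w l ⨯₃ w k ⬝ᵥ w j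
    · obtain ⟨j, hj⟩ := h₂
      filter_upwards [near,
        eventually_mem_hull_of_cross_nonneg (γ := 0) hβ hα (by simpa using hx') hj] with w' h h' _
      rcases le_total 0 (w' k ⨯₃ w' l ⬝ᵥ x) with hs | hs
      · exact h hs
      · exact h' (by rwa [cross_dotProduct_swap, neg_nonneg])
    · push Not at h₂
      filter_upwards [near] with w' h he
      refine h (he k l ⟨hkl, ⟨α, β, hα, hβ, hx⟩, fun i => ?_⟩)
      rw [cross_dotProduct_swap, neg_nonneg]
      exact h₂ i
  · push Not at h₁
    have h₁' : ∀ i, 0 ≤ w l ⨯₃ w k ⬝ᵥ w i := fun i => by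
      rw [cross_dotProduct_swap, neg_nonneg]
      exact h₁ i
    obtain ⟨i, hi⟩ : ∃ i, w l ⨯₃ w k ⬝ᵥ w i ≠ 0 := by
      by_contra! h
      exact hlk (eq_zero_of_forall_dotProduct_eq_zero hw h)
    filter_upwards [eventually_mem_hull_of_cross_nonneg (γ := 0) hβ hα (by simpa using hx')
      ((h₁' i).lt_of_ne hi.symm)] with w' h he
    exact h (he l k ⟨hlk, ⟨β, α, hβ, hα, hx'⟩, h₁'⟩)

lemma eventually_mem_hull [Finite ι] {K : Subfield L}
    (hw : Submodule.span L (Set.range w) = ⊤) (hx : IsRational K x)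
    (hxw : x ∈ PointedCone.hull L (Set.range w)) :
    ∀ᶠ w' in 𝓝 w, (∀ k, IsProjRational K (w k) → w' k = w k) →
      (∀ k l, IsEdge w k l x → 0 ≤ w' k ⨯₃ w' l ⬝ᵥ x) → x ∈ PointedCone.hull L (Set.range w') := by
  rcases mem_hull_range_fin_three_cases hxw with rfl | ⟨k, α, hα, rfl⟩ |
    ⟨k, l, α, β, hkl, hα, hβ, e⟩ | ⟨a, b, c, α, β, γ, hD, hα, hβ, hγ, e⟩
  · exact Eventually.of_forall fun w' _ _ => zero_mem _
  · refine Eventually.of_forall fun w' hr _ => ?_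
    rw [← hr k ((isProjRational_smul_iff hα.ne').1 hx.isProjRational)]
    exact PointedCone.smul_mem _ hα.le (mem_hull_range_self w' k)
  · filter_upwards [eventually_mem_hull_of_pair hw hkl hα hβ e] with w' h _ he
    exact h he
  · have hpos : 0 < w a ⨯₃ w b ⬝ᵥ x := by
      have : w a ⨯₃ w b ⬝ᵥ x = γ * (w a ⨯₃ w b ⬝ᵥ w c) := by
        rw [e, dotProduct_add, cross_dotProduct_add_smul, zero_add, dotProduct_smul, smul_eq_mul]
      rw [this]
      positivity
    have hcont : Continuous fun w' : ι → Fin 3 → L => w' a ⨯₃ w' b ⬝ᵥ x :=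
      continuous_cross_dotProduct (by fun_prop) (by fun_prop) (by fun_prop)
    filter_upwards [eventually_mem_hull_of_cross_nonneg hα hβ e hD,
      hcont.continuousAt.eventually (lt_mem_nhds hpos)] with w' h h' _ _
    exact h h'.le

end Perturbation

namespace NestedConeProblem

section Facets

variable {L : Type*} [Field L] [LinearOrder L] [IsStrictOrderedRing L] [TopologicalSpace L]
  [OrderTopology L] {K : Subfield L} {ρ γ ι : Type*} [Finite ρ]
  {P : NestedConeProblem K ρ γ (Fin 3)} {w : ι → Fin 3 → L}

lemma IsSolution.eventually_ineq_nonneg (hw : P.IsSolution w) {k : ι}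
    (hk : ¬ IsProjRational K (w k)) : ∀ᶠ x in 𝓝 (w k),
      ∀ n, P.IsNormalAt n (w k) → n ⬝ᵥ x = 0 → ∀ i, 0 ≤ P.ineq i ⬝ᵥ x := by
  have near : ∀ᶠ x in 𝓝 (w k), ∀ i, 0 < P.ineq i ⬝ᵥ w k → 0 < P.ineq i ⬝ᵥ x := by
    refine eventually_all.2 fun i => ?_
    by_cases hi : 0 < P.ineq i ⬝ᵥ w k
    · filter_upwards [(continuous_dotProduct_right (P.ineq i)).continuousAt.eventually
        (lt_mem_nhds hi)] with x hx _
      exact hx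
    · exact Eventually.of_forall fun x h => absurd h hi
  filter_upwards [near] with x hx n hn hnx i
  rcases (hw.nonneg i k).eq_or_lt with hi | hi
  · obtain ⟨s, hs⟩ := exists_eq_smul_of_dotProduct_eq_zero hn.isRational (P.ineq_rational i)
      hn.ne_zero hk hn.dotProduct_eq_zero hi.symm
    rw [hs, smul_dotProduct, hnx, smul_zero]
  · exact (hx i hi).le

/- If `w b` lay on the facet of `w k`, then `w k` could be replaced by a nearby rational vector of
that facet on the far side from `w b`. -/
lemma IsMaxSolution.dotProduct_pos (hw : P.IsMaxSolution w) (hK : Dense (K : Set L)) {k b : ι}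
    (hk : ¬ IsProjRational K (w k)) {n : Fin 3 → L} (hn : P.IsNormalAt n (w k))
    (hkb : w k ⨯₃ w b ≠ 0) : 0 < n ⬝ᵥ w b := by
  refine (hn.dotProduct_nonneg fun i => hw.nonneg i b).lt_of_ne fun hb => ?_
  set τ := w k ⨯₃ w b ⬝ᵥ n with hτdef
  have hnn : 0 < n ⬝ᵥ n := (Finset.sum_nonneg fun i _ => mul_self_nonneg (n i)).lt_of_ne'
    (dotProduct_self_eq_zero.not.2 hn.ne_zero)
  have hτ : τ ≠ 0 := by
    obtain ⟨s, hs⟩ := exists_cross_eq_smul hn.ne_zero hn.dotProduct_eq_zero hb.symm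
    rw [hτdef, hs, smul_dotProduct, smul_ne_zero_iff]
    exact ⟨fun hs0 => hkb (by rw [hs, hs0, zero_smul]), hnn.ne'⟩
  have hcont : Continuous fun x => τ * (x ⨯₃ w b ⬝ᵥ n) := continuous_const.mul
    (continuous_cross_dotProduct continuous_id continuous_const continuous_const)
  obtain ⟨x, t, hx, hnx, ⟨hxP, hxb⟩, ht, hτt⟩ := exists_isProjRational_side hK hn.isRational
    hn.ne_zero hk hn.dotProduct_eq_zero (neg_ne_zero.2 hτ)
    ((hw.eventually_ineq_nonneg hk).and
      (hcont.continuousAt.eventually (lt_mem_nhds (mul_self_pos.2 hτ))))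
  refine hw.notMem_hull_insert hk hx (hxP n hn hnx) ?_
  have key : (τ * (x ⨯₃ w b ⬝ᵥ n)) • w k = τ ^ 2 • x + (-τ * t * (n ⬝ᵥ n)) • w b := by
    rw [mul_smul, cross_dotProduct_smul_eq_of_dotProduct_eq_zero hn.ne_zero hnx hb.symm
      hn.dotProduct_eq_zero, cross_dotProduct_swap (w k) x, ht, smul_dotProduct]
    module
  have hkb' : b ≠ k := by
    rintro rfl
    exact hkb (cross_self _)
  refine Set.mem_of_eq_of_mem ((eq_inv_smul_iff₀ hxb.ne').2 key) <|
    PointedCone.smul_mem _ (inv_nonneg.2 hxb.le) (add_mem ?_ ?_)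
  · exact PointedCone.smul_mem _ (by positivity) (PointedCone.subset_hull (Set.mem_insert _ _))
  · exact PointedCone.smul_mem _ (by positivity)
      (PointedCone.subset_hull (.inr ⟨b, hkb', rfl⟩))

variable [Finite ι]

lemma IsMaxSolution.eventually_isProjRational [Finite γ] (hw : P.IsMaxSolution w) :
    ∀ᶠ w' in 𝓝 w, (∀ k, IsProjRational K (w k) → w' k = w k) →
      (∀ k, ¬ IsProjRational K (w k) → ∃ n, P.IsNormalAt n (w k) ∧ n ⬝ᵥ w' k = 0) →
      (∀ k l j, IsEdge w k l (P.gen j) → 0 ≤ w' k ⨯₃ w' l ⬝ᵥ P.gen j) →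
      ∀ k, IsProjRational K (w' k) → IsProjRational K (w k) := by
  have hineq : ∀ᶠ w' in 𝓝 w, ∀ k, ¬ IsProjRational K (w k) →
      ∀ n, P.IsNormalAt n (w k) → n ⬝ᵥ w' k = 0 → ∀ i, 0 ≤ P.ineq i ⬝ᵥ w' k := by
    refine eventually_all.2 fun k => ?_
    by_cases hk : IsProjRational K (w k)
    · exact Eventually.of_forall fun _ h => absurd hk h
    · filter_upwards [(continuous_apply k).continuousAt.eventually
        (hw.eventually_ineq_nonneg hk)] with w' h _
      exact h
  have hgen := eventually_all.2 fun j =>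
    eventually_mem_hull hw.span_eq_top (P.gen_rational j) (hw.mem j)
  filter_upwards [hineq, hgen] with w' hineq hgen hrat hfacet hedge
  refine hw.maximal w' ⟨fun i k => ?_, fun j => hgen j hrat fun k l => hedge k l j⟩
    fun k hk => hrat k hk ▸ hk
  by_cases hk : IsProjRational K (w k)
  · rw [hrat k hk]
    exact hw.nonneg i k
  · obtain ⟨n, hn, hn0⟩ := hfacet k hk
    exact hineq k hk n hn hn0 i

end Facets

section Edges

variable {L : Type*} [Field L] [LinearOrder L] [IsStrictOrderedRing L] [TopologicalSpace L]
  [OrderTopology L] {K : Subfield L} {ρ γ ι : Type*} [Finite ρ] [Finite ι]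
  {P : NestedConeProblem K ρ γ (Fin 3)} {w : ι → Fin 3 → L} {k b b' : ι}

lemma IsMaxSolution.not_isProjRational_of_eq_add (hw : P.IsMaxSolution w)
    (hK : Dense (K : Set L)) (hk : ¬ IsProjRational K (w k)) (hkb : w k ⨯₃ w b ≠ 0)
    {x : Fin 3 → L} (hx : IsRational K x) {α β : L} (hα : 0 < α) (e : x = α • w k + β • w b) :
    ¬ IsProjRational K (w b) := by
  rintro ⟨c, q, hq, hb⟩
  obtain ⟨n, hn⟩ := hw.exists_isNormalAt hK hk
  have hnq : n ⬝ᵥ q ≠ 0 := fun h => (hw.dotProduct_pos hK hk hn hkb).ne' (by simp [hb, h])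
  have hmem : β * c ∈ K := by
    have hnx : n ⬝ᵥ x = β * c * (n ⬝ᵥ q) := by
      simp [e, hb, hn.dotProduct_eq_zero, mul_assoc]
    rw [(eq_div_iff hnq).2 hnx.symm]
    exact K.div_mem (hn.isRational.dotProduct_mem hx) (hn.isRational.dotProduct_mem hq)
  have hsub : α • w k = x - (β * c) • q := by rw [e, hb, mul_smul, add_sub_cancel_right]
  exact hk <| (isProjRational_smul_iff hα.ne').1 <|
    hsub ▸ (hx.sub (hq.smul hmem)).isProjRational

lemma IsMaxSolution.not_isProjRational_right (hw : P.IsMaxSolution w) (hK : Dense (K : Set L))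
    {j : γ} (h : IsEdge w k b (P.gen j)) (hk : ¬ IsProjRational K (w k)) :
    ¬ IsProjRational K (w b) := by
  obtain ⟨α, β, hα, -, e⟩ := h.exists_pos
  exact hw.not_isProjRational_of_eq_add hK hk h.cross_ne_zero (P.gen_rational j) hα e

lemma IsMaxSolution.not_isProjRational_left (hw : P.IsMaxSolution w) (hK : Dense (K : Set L))
    {j : γ} (h : IsEdge w k b (P.gen j)) (hb : ¬ IsProjRational K (w b)) :
    ¬ IsProjRational K (w k) := by
  obtain ⟨α, β, -, hβ, e⟩ := h.exists_pos
  exact hw.not_isProjRational_of_eq_add hK hb h.cross_ne_zero_symm (P.gen_rational j) hβ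
    (e.trans (add_comm _ _))

lemma IsMaxSolution.exists_gen_eq_smul (hw : P.IsMaxSolution w) (hK : Dense (K : Set L))
    {j j' : γ} (hk : ¬ IsProjRational K (w k)) (h : IsEdge w k b (P.gen j))
    (h' : IsEdge w k b (P.gen j')) : ∃ μ : L, 0 < μ ∧ P.gen j' = μ • P.gen j := by
  obtain ⟨α, β, -, hβ, e⟩ := h.exists_pos
  obtain ⟨α', β', -, hβ', e'⟩ := h'.exists_pos
  obtain ⟨n, hn⟩ := hw.exists_isNormalAt hK hk
  have hnb := (hw.dotProduct_pos hK hk hn h.cross_ne_zero).ne'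
  have hmem : β' / β ∈ K := by
    have hdiv : β' / β = n ⬝ᵥ P.gen j' / n ⬝ᵥ P.gen j := by
      simp [e, e', hn.dotProduct_eq_zero, mul_div_mul_right _ _ hnb]
    exact hdiv ▸ K.div_mem (hn.isRational.dotProduct_mem (P.gen_rational j'))
      (hn.isRational.dotProduct_mem (P.gen_rational j))
  have hsub : P.gen j' - (β' / β) • P.gen j = (α' - β' / β * α) • w k := by
    rw [e, e', smul_add, smul_smul, smul_smul, div_mul_cancel₀ _ hβ.ne']
    module
  refine ⟨β' / β, div_pos hβ' hβ, ?_⟩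
  rcases eq_or_ne (α' - β' / β * α) 0 with h0 | h0
  · rwa [h0, zero_smul, sub_eq_zero] at hsub
  · refine absurd ((isProjRational_smul_iff h0).1 ?_) hk
    exact hsub ▸ ((P.gen_rational j').sub ((P.gen_rational j).smul hmem)).isProjRational

lemma IsMaxSolution.eq_of_coplanar (hw : P.IsMaxSolution w) (hK : Dense (K : Set L))
    (hk : ¬ IsProjRational K (w k)) (hb : ¬ IsProjRational K (w b))
    (hb' : ¬ IsProjRational K (w b')) (hkb : w k ⨯₃ w b ≠ 0) (hkb' : w k ⨯₃ w b' ≠ 0)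
    (hD : w k ⨯₃ w b ⬝ᵥ w b' = 0) : b = b' := by
  by_contra hne
  obtain ⟨x, y, e⟩ := exists_eq_add_of_cross_dotProduct_eq_zero hkb hD
  obtain ⟨n, hn⟩ := hw.exists_isNormalAt hK hk
  have hy : 0 < y := by
    have hnb' := hw.dotProduct_pos hK hk hn hkb'
    rw [e, dotProduct_add, dotProduct_smul, dotProduct_smul, hn.dotProduct_eq_zero, smul_zero,
      zero_add] at hnb'
    exact pos_of_mul_pos_left hnb' (hw.dotProduct_pos hK hk hn hkb).le
  have mem : ∀ {i l : ι}, i ≠ l → w i ∈ PointedCone.hull L (w '' {l}ᶜ) := fun h =>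
    PointedCone.subset_hull ⟨_, h, rfl⟩
  have ne : ∀ {i : ι}, w k ⨯₃ w i ≠ 0 → k ≠ i := by
    rintro i h rfl
    exact h (cross_self _)
  rcases le_total 0 x with hx | hx
  · refine hw.notMem_hull_image_compl hb' (Set.mem_of_eq_of_mem e (add_mem ?_ ?_))
    exacts [PointedCone.smul_mem _ hx (mem (ne hkb')), PointedCone.smul_mem _ hy.le (mem hne)]
  · have e' : w b = y⁻¹ • (w b' + (-x) • w k) := by
      rw [eq_inv_smul_iff₀ hy.ne', e]
      module
    refine hw.notMem_hull_image_compl hb (Set.mem_of_eq_of_mem e' <|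
      PointedCone.smul_mem _ (inv_nonneg.2 hy.le) (add_mem (mem (Ne.symm hne)) ?_))
    exact PointedCone.smul_mem _ (neg_nonneg.2 hx) (mem (ne hkb))

lemma IsMaxSolution.eq_of_isEdge_right (hw : P.IsMaxSolution w) (hK : Dense (K : Set L))
    {j j' : γ} (hk : ¬ IsProjRational K (w k)) (h : IsEdge w k b (P.gen j))
    (h' : IsEdge w k b' (P.gen j')) : b = b' := by
  refine hw.eq_of_coplanar hK hk (hw.not_isProjRational_right hK h hk)
    (hw.not_isProjRational_right hK h' hk) h.cross_ne_zero h'.cross_ne_zero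
    (le_antisymm ?_ (h.nonneg b'))
  have := h'.nonneg b
  rwa [cross_dotProduct_rotate, cross_dotProduct_rotate, cross_dotProduct_swap, neg_nonneg] at this

lemma IsMaxSolution.eq_of_isEdge_left (hw : P.IsMaxSolution w) (hK : Dense (K : Set L))
    {j j' : γ} (hk : ¬ IsProjRational K (w k)) (h : IsEdge w b k (P.gen j))
    (h' : IsEdge w b' k (P.gen j')) : b = b' := by
  refine hw.eq_of_coplanar hK hk (hw.not_isProjRational_left hK h hk)
    (hw.not_isProjRational_left hK h' hk) h.cross_ne_zero_symm h'.cross_ne_zero_symm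
    (le_antisymm ?_ ?_)
  · rw [cross_dotProduct_swap, neg_nonpos]
    exact h.nonneg b'
  · rw [← cross_dotProduct_rotate]
    exact h'.nonneg b

/- Without an edge leaving it, the vector `w k` alone could be moved along its facet towards a
rational vector. -/
lemma IsMaxSolution.exists_isEdge [Finite γ] (hw : P.IsMaxSolution w) (hK : Dense (K : Set L))
    (hk : ¬ IsProjRational K (w k)) : ∃ b j, IsEdge w k b (P.gen j) := by
  classical
  by_contra! hcon
  obtain ⟨n, hn⟩ := hw.exists_isNormalAt hK hk
  have htend : Tendsto (fun x => Function.update w k x) (𝓝 (w k)) (𝓝 w) := by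
    have h := (continuous_const.update k continuous_id :
      Continuous fun x => Function.update w k x).tendsto (w k)
    rwa [Function.update_eq_self] at h
  obtain ⟨x, s, hx, hnx, hmax, hs, hs0⟩ := exists_isProjRational_side hK hn.isRational hn.ne_zero
    hk hn.dotProduct_eq_zero (neg_ne_zero.2 one_ne_zero)
    (htend.eventually hw.eventually_isProjRational)
  refine hk (hmax (fun i hi => ?_) (fun i hi => ?_) (fun i l j h => ?_) k (by simpa using hx))
  · exact Function.update_of_ne (by rintro rfl; exact hk hi) _ _
  · rcases eq_or_ne i k with rfl | hik
    · exact ⟨n, hn, by simpa using hnx⟩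
    · obtain ⟨n', hn'⟩ := hw.exists_isNormalAt hK hi
      exact ⟨n', hn', by simpa [hik] using hn'.dotProduct_eq_zero⟩
  · have hik : i ≠ k := by
      rintro rfl
      exact hcon l j h
    obtain ⟨α, β, -, hβ, e⟩ := h.exists_pos
    rcases eq_or_ne l k with rfl | hlk
    · have hside : w i ⨯₃ x ⬝ᵥ P.gen j = β * -s * (n ⬝ᵥ w i) := by
        rw [e, dotProduct_add, dotProduct_smul, dotProduct_smul, cross_dotProduct_self_left,
          cross_dotProduct_rotate, cross_dotProduct_swap, hs, smul_dotProduct]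
        simp only [smul_eq_mul]
        ring
      rw [Function.update_of_ne hik, Function.update_self, hside]
      have := hn.dotProduct_nonneg fun r => hw.nonneg r i
      have : 0 < -s := by simpa using hs0
      positivity
    · rw [Function.update_of_ne hik, Function.update_of_ne hlk, e, cross_dotProduct_add_smul]

end Edges

end NestedConeProblem

lemma exists_cycle {α : Type*} [Finite α] [Nonempty α] (f : α → α) :
    ∃ (m : ℕ) (κ : Fin (m + 1) → α), Function.Injective κ ∧ ∀ i, f (κ i) = κ (i + 1) := by
  obtain ⟨a⟩ := ‹Nonempty α›
  obtain ⟨i, j, hij, h⟩ := Finite.exists_ne_map_eq_of_infinite fun i : ℕ => f^[i] a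
  obtain ⟨b, hb⟩ : ∃ b, b ∈ Function.periodicPts f := by
    wlog hlt : i < j generalizing i j
    · exact this j i hij.symm h.symm (hij.lt_or_gt.resolve_left hlt)
    refine ⟨f^[i] a, j - i, Nat.sub_pos_of_lt hlt, ?_⟩
    rw [Function.IsPeriodicPt, Function.IsFixedPt, ← Function.iterate_add_apply,
      Nat.sub_add_cancel hlt.le]
    exact h.symm
  obtain ⟨m, hm⟩ := Nat.exists_eq_succ_of_ne_zero
    (Function.minimalPeriod_pos_of_mem_periodicPts hb).ne'
  refine ⟨m, fun i => f^[i] b, fun i j hij => ?_, fun i => ?_⟩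
  · exact Fin.ext <| Function.iterate_injOn_Iio_minimalPeriod (hm ▸ i.isLt) (hm ▸ j.isLt) hij
  · have hmod (k : ℕ) : f^[k % (m + 1)] b = f^[k] b := by
      rw [← Nat.succ_eq_add_one m, ← hm, Function.iterate_mod_minimalPeriod_eq]
    change f (f^[i] b) = f^[(i + 1 : Fin (m + 1))] b
    rw [← Function.iterate_succ_apply' f, Fin.val_add, Fin.val_one', Nat.add_mod_mod, hmod]

section Chain

variable {L : Type*} {m : ℕ}

/-- The composite of successive central projections of a ray `x`: the `i`-th step projects through
the ray `v i` onto the plane with normal `n (i + 1)`. -/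
def projectionChain [CommRing L] (n v : Fin (m + 1) → Fin 3 → L) :
    Fin (m + 1) → (Fin 3 → L) →ₗ[L] Fin 3 → L :=
  Fin.induction LinearMap.id fun i T =>
    crossProduct (n i.succ) ∘ₗ crossProduct (v i.castSucc) ∘ₗ T

section CommRing

variable [CommRing L] (n v : Fin (m + 1) → Fin 3 → L)

lemma projectionChain_succ (i : Fin m) (x : Fin 3 → L) :
    projectionChain n v i.succ x = n i.succ ⨯₃ (v i.castSucc ⨯₃ projectionChain n v i.castSucc x) :=
  rfl

variable {n v}

lemma dotProduct_projectionChain {x : Fin 3 → L} (hx : n 0 ⬝ᵥ x = 0) (i : Fin (m + 1)) :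
    n i ⬝ᵥ projectionChain n v i x = 0 := by
  cases i using Fin.cases with
  | zero => exact hx
  | succ i => rw [projectionChain_succ, dot_self_cross]

lemma projectionChain_cross_succ_dotProduct (i : Fin m) (x : Fin 3 → L) :
    projectionChain n v i.castSucc x ⨯₃ projectionChain n v i.succ x ⬝ᵥ v i.castSucc = 0 := by
  rw [projectionChain_succ, cross_dotProduct_rotate, cross_dotProduct_rotate, dot_cross_self]

end CommRing

lemma IsRational.projectionChain [Field L] {K : Subfield L} {n v : Fin (m + 1) → Fin 3 → L}
    (hn : ∀ i, IsRational K (n i)) (hv : ∀ i, IsRational K (v i)) {x : Fin 3 → L}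
    (hx : IsRational K x) (i : Fin (m + 1)) : IsRational K (projectionChain n v i x) := by
  induction i using Fin.induction with
  | zero => exact hx
  | succ i ih => exact (hn _).cross ((hv _).cross ih)

lemma exists_projectionChain_eq_smul [Field L] [LinearOrder L] [IsStrictOrderedRing L]
    {n v u : Fin (m + 1) → Fin 3 → L} (hn : ∀ i, n i ⬝ᵥ u i = 0)
    (hpos : ∀ i : Fin m, 0 < n i.succ ⬝ᵥ u i.castSucc)
    (hv : ∀ i : Fin m, ∃ α β : L, 0 < β ∧ v i.castSucc = α • u i.castSucc + β • u i.succ)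
    (i : Fin (m + 1)) : ∃ c : L, 0 < c ∧ projectionChain n v i (u 0) = c • u i := by
  induction i using Fin.induction with
  | zero => exact ⟨1, one_pos, (one_smul L _).symm⟩
  | succ i ih =>
    obtain ⟨c, hc, hci⟩ := ih
    obtain ⟨α, β, hβ, hvi⟩ := hv i
    refine ⟨c * β * (n i.succ ⬝ᵥ u i.castSucc), mul_pos (mul_pos hc hβ) (hpos i), ?_⟩
    rw [projectionChain_succ, hci, hvi, cross_cross_eq_smul_sub_smul']
    simp only [dotProduct_comm (_ + _), dotProduct_smul, dotProduct_add, hn]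
    module

end Chain

lemma exists_eq_smul_of_dotProduct_eq_zero_fin_two {L : Type*} [Field L] {n x : Fin 2 → L}
    (hn : n ≠ 0) (h : n ⬝ᵥ x = 0) : ∃ c : L, x = c • ![-n 1, n 0] := by
  rw [vec2_dotProduct] at h
  by_cases h0 : n 0 = 0
  · have h1 : n 1 ≠ 0 := fun h1 => hn (by ext i; fin_cases i; exacts [h0, h1])
    refine ⟨-(x 0 / n 1), ?_⟩
    ext i
    fin_cases i
    · simp [h1]
    · simpa [h0, h1] using h
  · refine ⟨x 1 / n 0, ?_⟩
    ext i
    fin_cases i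
    · simp only [Fin.zero_eta, Pi.smul_apply, cons_val_zero, smul_eq_mul]
      field_simp
      linear_combination h
    · simp [h0]

lemma tendsto_extend {α β X Y : Type*} [TopologicalSpace Y] {f : α → β}
    (hf : Function.Injective f) {l : Filter X} {u : X → α → Y} {v : β → Y}
    (h : Tendsto u l (𝓝 (v ∘ f))) : Tendsto (fun x => Function.extend f (u x) v) l (𝓝 v) := by
  refine tendsto_pi_nhds.2 fun b => ?_
  by_cases hb : b ∈ Set.range f
  · obtain ⟨a, rfl⟩ := hb
    exact (tendsto_pi_nhds.1 h a).congr fun x => (hf.extend_apply _ _ _).symm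
  · exact tendsto_const_nhds.congr fun x => (Function.extend_apply' _ _ _ hb).symm

namespace NestedConeProblem

section Cycle

variable {L : Type*} [Field L] [LinearOrder L] [IsStrictOrderedRing L] [TopologicalSpace L]
  [OrderTopology L] {K : Subfield L} {ρ γ ι : Type*} [Finite ρ]
  {P : NestedConeProblem K ρ γ (Fin 3)} {w : ι → Fin 3 → L}
  {m : ℕ} {κ : Fin (m + 1) → ι} {J : Fin (m + 1) → γ}

lemma IsMaxSolution.exists_projectionChain_eq_smul (hw : P.IsMaxSolution w)
    (hK : Dense (K : Set L)) (hirr : ∀ i, ¬ IsProjRational K (w (κ i)))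
    (hE : ∀ i, IsEdge w (κ i) (κ (i + 1)) (P.gen (J i))) {n : Fin (m + 1) → Fin 3 → L}
    (hn : ∀ i, P.IsNormalAt (n i) (w (κ i))) (i : Fin (m + 1)) :
    ∃ c : L, 0 < c ∧ projectionChain n (fun i => P.gen (J i)) i (w (κ 0)) = c • w (κ i) := by
  have hE' (i : Fin m) : IsEdge w (κ i.castSucc) (κ i.succ) (P.gen (J i.castSucc)) :=
    Fin.coeSucc_eq_succ ▸ hE i.castSucc
  refine _root_.exists_projectionChain_eq_smul (u := w ∘ κ) (fun i => (hn i).dotProduct_eq_zero)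
    (fun i => hw.dotProduct_pos hK (hirr _) (hn _) (hE' i).cross_ne_zero_symm) (fun i => ?_) i
  obtain ⟨α, β, -, hβ, e⟩ := (hE' i).exists_pos
  exact ⟨α, β, hβ, e⟩

variable [Finite ι]

lemma IsMaxSolution.extend_cross_extend_nonneg (hw : P.IsMaxSolution w) (hK : Dense (K : Set L))
    (hκ : Function.Injective κ) (hirr : ∀ i, ¬ IsProjRational K (w (κ i)))
    (hE : ∀ i, IsEdge w (κ i) (κ (i + 1)) (P.gen (J i))) {u : Fin (m + 1) → Fin 3 → L}
    (hu : ∀ i, 0 ≤ u i ⨯₃ u (i + 1) ⬝ᵥ P.gen (J i)) {k l : ι} {j : γ}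
    (h : IsEdge w k l (P.gen j)) :
    0 ≤ Function.extend κ u w k ⨯₃ Function.extend κ u w l ⬝ᵥ P.gen j := by
  by_cases hk : k ∈ Set.range κ
  · obtain ⟨i, rfl⟩ := hk
    obtain rfl := hw.eq_of_isEdge_right hK (hirr i) (hE i) h
    obtain ⟨μ, hμ, e⟩ := hw.exists_gen_eq_smul hK (hirr i) (hE i) h
    rw [hκ.extend_apply, hκ.extend_apply, e, dotProduct_smul]
    exact mul_nonneg hμ.le (hu i)
  have hl : l ∉ Set.range κ := by
    rintro ⟨i, rfl⟩
    have hE' := hE (i - 1)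
    rw [sub_add_cancel] at hE'
    exact hk ⟨i - 1, hw.eq_of_isEdge_left hK (hirr i) hE' h⟩
  obtain ⟨α, β, -, -, e⟩ := h.exists_pos
  rw [Function.extend_apply' _ _ _ hk, Function.extend_apply' _ _ _ hl, e,
    cross_dotProduct_add_smul]

lemma IsMaxSolution.eventually_not_isProjRational_cycle [Finite γ] (hw : P.IsMaxSolution w)
    (hK : Dense (K : Set L)) (hκ : Function.Injective κ)
    (hirr : ∀ i, ¬ IsProjRational K (w (κ i)))
    (hE : ∀ i, IsEdge w (κ i) (κ (i + 1)) (P.gen (J i))) :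
    ∀ᶠ u in 𝓝 (w ∘ κ), (∀ i, ∃ n, P.IsNormalAt n (w (κ i)) ∧ n ⬝ᵥ u i = 0) →
      (∀ i, 0 ≤ u i ⨯₃ u (i + 1) ⬝ᵥ P.gen (J i)) → ∀ i, ¬ IsProjRational K (u i) := by
  filter_upwards [(tendsto_extend hκ tendsto_id).eventually hw.eventually_isProjRational]
    with u hmax hfacet hu i hi
  refine hirr i (hmax (fun k hk => Function.extend_apply' _ _ _ ?_) (fun k hk => ?_)
    (fun k l j h => hw.extend_cross_extend_nonneg hK hκ hirr hE hu h) (κ i) ?_)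
  · rintro ⟨i, rfl⟩
    exact hirr i hk
  · by_cases hk' : k ∈ Set.range κ
    · obtain ⟨i, rfl⟩ := hk'
      simpa only [id_eq, hκ.extend_apply] using hfacet i
    · obtain ⟨n, hn⟩ := hw.exists_isNormalAt hK hk
      exact ⟨n, hn, by rw [Function.extend_apply' _ _ _ hk', hn.dotProduct_eq_zero]⟩
  · rwa [hκ.extend_apply]

/- Move one ray of the cycle along its facet and let it drag the others along through all edges but
the last. The condition at the last edge is then a quadratic inequality over `K` in the moving ray,
so it still holds at some nearby rational ray. -/
lemma IsMaxSolution.not_isEdge_cycle [Finite γ] (hw : P.IsMaxSolution w) (hK : Dense (K : Set L))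
    (hκ : Function.Injective κ) (hirr : ∀ i, ¬ IsProjRational K (w (κ i))) :
    ¬ ∀ i, IsEdge w (κ i) (κ (i + 1)) (P.gen (J i)) := by
  intro hE
  choose n hn using fun i => hw.exists_isNormalAt hK (hirr i)
  choose c hc hcT using hw.exists_projectionChain_eq_smul hK hirr hE hn
  set T := projectionChain n fun i => P.gen (J i)
  let u (x : Fin 3 → L) (i : Fin (m + 1)) : Fin 3 → L := (c i)⁻¹ • T i x
  have hu : Tendsto u (𝓝 (w (κ 0))) (𝓝 (w ∘ κ)) := by
    have hcont : Continuous u :=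
      continuous_pi fun i => (T i).continuous_on_pi.const_smul (c i)⁻¹
    have hu0 : u (w (κ 0)) = w ∘ κ := funext fun i => by
      simp only [u, hcT, inv_smul_smul₀ (hc i).ne', Function.comp_apply]
    exact hu0 ▸ hcont.tendsto _
  have hclosed : T (Fin.last m) (w (κ 0)) ⨯₃ w (κ 0) ⬝ᵥ P.gen (J (Fin.last m)) = 0 := by
    obtain ⟨α, β, -, -, e⟩ := (hE (Fin.last m)).exists_pos
    rw [Fin.last_add_one] at e
    rw [hcT, e, map_smul, LinearMap.smul_apply, smul_dotProduct, cross_dotProduct_add_smul,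
      smul_zero]
  obtain ⟨x, hx, hnx, hirr', hquad⟩ := exists_isProjRational_quadratic_nonneg hK (hn 0).isRational
    (hn 0).ne_zero (hirr 0) (hn 0).dotProduct_eq_zero
    (fun _ hx => hx.projectionChain (fun i => (hn i).isRational) (fun i => P.gen_rational _) _)
    (P.gen_rational _) hclosed
    (hu.eventually (hw.eventually_not_isProjRational_cycle hK hκ hirr hE))
  refine hirr' (fun i => ⟨n i, hn i, ?_⟩) (fun i => ?_) 0 (hx.smul _)
  · rw [dotProduct_smul, dotProduct_projectionChain hnx, smul_zero]
  · simp only [u, map_smul, LinearMap.smul_apply, smul_dotProduct, smul_eq_mul]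
    refine mul_nonneg (inv_nonneg.2 (hc _).le) (mul_nonneg (inv_nonneg.2 (hc _).le) ?_)
    cases i using Fin.lastCases with
    | last => rwa [Fin.last_add_one]
    | cast i => rw [Fin.coeSucc_eq_succ, projectionChain_cross_succ_dotProduct]

lemma IsMaxSolution.isProjRational_of_fin_three [Finite γ] (hw : P.IsMaxSolution w)
    (hK : Dense (K : Set L)) (k : ι) : IsProjRational K (w k) := by
  by_contra hk
  have hnext (k : {k // ¬ IsProjRational K (w k)}) :
      ∃ (b : {k // ¬ IsProjRational K (w k)}) (j : γ), IsEdge w k b (P.gen j) := by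
    obtain ⟨b, j, h⟩ := hw.exists_isEdge hK k.2
    exact ⟨⟨b, hw.not_isProjRational_right hK h k.2⟩, j, h⟩
  choose f J hJ using hnext
  have : Nonempty {k // ¬ IsProjRational K (w k)} := ⟨⟨k, hk⟩⟩
  obtain ⟨m, κ, hκ, hf⟩ := exists_cycle f
  exact hw.not_isEdge_cycle hK (κ := fun i => (κ i).1) (J := fun i => J (κ i))
    (Subtype.val_injective.comp hκ) (fun i => (κ i).2) fun i => hf i ▸ hJ (κ i)

end Cycle

section Rational

variable {L : Type*} [Field L] [LinearOrder L] [IsStrictOrderedRing L] [TopologicalSpace L]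
  [OrderTopology L] {K : Subfield L} {ρ γ ι : Type*} [Finite ρ] [Finite ι]

lemma IsMaxSolution.isProjRational_of_fin_two {P : NestedConeProblem K ρ γ (Fin 2)}
    {w : ι → Fin 2 → L} (hw : P.IsMaxSolution w) (hK : Dense (K : Set L)) (k : ι) :
    IsProjRational K (w k) := by
  by_contra hk
  obtain ⟨n, hn⟩ := hw.exists_isNormalAt hK hk
  obtain ⟨c, hc⟩ := exists_eq_smul_of_dotProduct_eq_zero_fin_two hn.ne_zero hn.dotProduct_eq_zero
  refine hk ⟨c, _, fun i => ?_, hc⟩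
  fin_cases i
  exacts [K.neg_mem (hn.isRational 1), hn.isRational 0]

lemma IsMaxSolution.isProjRational [Finite γ] {r : ℕ} (hr : r ≤ 3)
    {P : NestedConeProblem K ρ γ (Fin r)} {w : ι → Fin r → L} (hw : P.IsMaxSolution w)
    (hK : Dense (K : Set L)) (k : ι) : IsProjRational K (w k) := by
  interval_cases r
  · exact ⟨0, 0, IsRational.zero, Subsingleton.elim _ _⟩
  · exact ⟨w k 0, 1, fun _ => K.one_mem, by ext i; simp [Subsingleton.elim i 0]⟩
  · exact hw.isProjRational_of_fin_two hK k
  · exact hw.isProjRational_of_fin_three hK k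

end Rational

end NestedConeProblem

section Rank

variable {F L p q : Type*} [Field F] [Field L]

lemma exists_rank_factorization [Fintype p] [Fintype q] (M : Matrix p q F) :
    ∃ (A : Matrix p (Fin M.rank) F) (B : Matrix (Fin M.rank) q F)
      (A' : Matrix (Fin M.rank) p F) (B' : Matrix q (Fin M.rank) F),
      M = A * B ∧ A' * A = 1 ∧ B * B' = 1 := by
  classical
  let φ := M.mulVecLin
  have e : LinearMap.range φ ≃ₗ[F] (Fin M.rank → F) :=
    LinearEquiv.ofFinrankEq _ _ (Module.finrank_fin_fun F).symm
  let a : (Fin M.rank → F) →ₗ[F] (p → F) := (LinearMap.range φ).subtype ∘ₗ e.symm.toLinearMap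
  let b : (q → F) →ₗ[F] (Fin M.rank → F) := e.toLinearMap ∘ₗ φ.rangeRestrict
  have hab : a ∘ₗ b = φ := LinearMap.ext fun x => by simp [a, b]
  obtain ⟨a', ha⟩ := a.exists_leftInverse_of_injective (LinearMap.ker_eq_bot.2
    ((Submodule.injective_subtype _).comp e.symm.injective))
  obtain ⟨b', hb⟩ := b.exists_rightInverse_of_surjective (LinearMap.range_eq_top.2
    (e.surjective.comp φ.surjective_rangeRestrict))
  refine ⟨a.toMatrix', b.toMatrix', a'.toMatrix', b'.toMatrix', ?_, ?_, ?_⟩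
  · rw [← LinearMap.toMatrix'_comp, hab]
    exact (LinearMap.toMatrix'_toLin' M).symm
  · rw [← LinearMap.toMatrix'_comp, ha, LinearMap.toMatrix'_id]
  · rw [← LinearMap.toMatrix'_comp, hb, LinearMap.toMatrix'_id]

lemma rank_map_eq_rank [Finite p] [Fintype q] (M : Matrix p q F) (f : F →+* L) :
    (M.map f).rank = M.rank := by
  cases nonempty_fintype p
  obtain ⟨A, B, A', B', hM, hA, hB⟩ := exists_rank_factorization M
  apply le_antisymm
  · calc (M.map f).rank = (A.map f * B.map f).rank := by rw [← Matrix.map_mul, ← hM]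
      _ ≤ (A.map f).rank := rank_mul_le_left _ _
      _ ≤ M.rank := (rank_le_card_width _).trans_eq (Fintype.card_fin _)
  · have hone : A'.map f * M.map f * B'.map f = 1 := by
      have hM' : A' * M * B' = A' * A * (B * B') := by
        rw [Matrix.mul_assoc A', Matrix.mul_assoc A', ← Matrix.mul_assoc A]
        exact congrArg (fun N => A' * (N * B')) hM
      rw [← Matrix.map_mul, ← Matrix.map_mul, hM', hA, hB, Matrix.one_mul,
        Matrix.map_one f f.map_zero f.map_one]
    calc M.rank = (1 : Matrix (Fin M.rank) (Fin M.rank) L).rank := by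
          rw [rank_one, Fintype.card_fin]
      _ = (A'.map f * M.map f * B'.map f).rank := by rw [hone]
      _ ≤ (A'.map f * M.map f).rank := rank_mul_le_left _ _
      _ ≤ (M.map f).rank := rank_mul_le_right _ _

lemma exists_eq_mul_of_rank_eq {κ : Type*} [Fintype q] [Fintype κ]
    {M : Matrix p q F} {W : Matrix p κ F} {H : Matrix κ q F} (h : M = W * H)
    (hr : W.rank = M.rank) : ∃ X : Matrix q κ F, W = M * X := by
  classical
  have hle : LinearMap.range M.mulVecLin ≤ LinearMap.range W.mulVecLin := by
    rw [h, mulVecLin_mul]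
    exact LinearMap.range_comp_le_range _ _
  have hcol : ∀ k, ∃ x, M *ᵥ x = W.col k := fun k => by
    have hk : W.col k ∈ LinearMap.range W.mulVecLin := ⟨Pi.single k 1, mulVec_single_one W k⟩
    rwa [← Submodule.eq_of_le_of_finrank_eq hle hr.symm] at hk
  choose x hx using hcol
  exact ⟨of fun j k => x k j, ext fun i k => (congrFun (hx k) i).symm⟩

end Rank

section RestrictedNMF

variable {p q : Type*} [Fintype q]

/-- The existence of a restricted nonnegative matrix factorization of `M` with inner dimension `d`:
a factorization `M = W * H` into nonnegative matrices with `rank W = rank M`. -/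
def HasRestrictedNMF {F : Type*} [Field F] [LinearOrder F] (M : Matrix p q F) (d : ℕ) : Prop :=
  ∃ W : Matrix p (Fin d) F, ∃ H : Matrix (Fin d) q F,
    (∀ i k, 0 ≤ W i k) ∧ (∀ k j, 0 ≤ H k j) ∧ M = W * H ∧ W.rank = M.rank

/-- The restricted nonnegative rank of `M` over an arbitrary ordered field: the smallest inner
dimension of a restricted nonnegative factorization, and `0` if there is none. -/
noncomputable def restrictedNonnegRank {F : Type*} [Field F] [LinearOrder F] (M : Matrix p q F) :
    ℕ :=
  sInf {d | HasRestrictedNMF M d}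

variable {F L : Type*} [Field F] [Field L] [LinearOrder L]

variable (f : F →+* L)

/-- The nested cones associated with a rank factorization `M = A * B`: the rows of `A` are the
inequalities of the outer cone and the columns of `B` generate the inner cone. -/
def NestedConeProblem.ofMatrix {r : ℕ} (A : Matrix p (Fin r) F) {B : Matrix (Fin r) q F}
    {B' : Matrix q (Fin r) F} (hB : B * B' = 1) :
    NestedConeProblem f.fieldRange p q (Fin r) where
  ineq := (A.map f).row
  gen := (B.map f).col
  ineq_rational i a := ⟨A i a, rfl⟩
  gen_rational j a := ⟨B a j, rfl⟩
  span_gen := by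
    rw [← range_mulVecLin, LinearMap.range_eq_top]
    intro x
    refine ⟨B'.map f *ᵥ x, ?_⟩
    rw [mulVecLin_apply, mulVec_mulVec, ← Matrix.map_mul, hB,
      Matrix.map_one f f.map_zero f.map_one, one_mulVec]

variable [IsStrictOrderedRing L]

lemma NestedConeProblem.ofMatrix_isSolution_iff {r d : ℕ} {A : Matrix p (Fin r) F}
    {B : Matrix (Fin r) q F} {B' : Matrix q (Fin r) F} (hB : B * B' = 1)
    {Y : Matrix (Fin r) (Fin d) L} :
    (ofMatrix f A hB).IsSolution Y.col ↔ (∀ i k, 0 ≤ (A.map f * Y) i k) ∧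
      ∃ H : Matrix (Fin d) q L, (∀ k j, 0 ≤ H k j) ∧ B.map f = Y * H := by
  refine ⟨fun h => ⟨h.nonneg, ?_⟩, fun ⟨hnn, H, hH, e⟩ => ⟨hnn, fun j => ?_⟩⟩
  · choose c hc e using fun j => mem_hull_range_iff.1 (h.mem j)
    refine ⟨of fun k j => c j k, fun k j => hc j k, ext fun a j => ?_⟩
    refine (congrFun (e j) a).trans ?_
    simp [Matrix.mul_apply, mul_comm]
  · refine mem_hull_range_iff.2 ⟨fun k => H k j, fun k => hH k j, funext fun a => ?_⟩
    refine (congrFun (congrFun e a) j).trans ?_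
    simp [Matrix.mul_apply, mul_comm]

variable {f} {M : Matrix p q F} {d r : ℕ}

lemma HasRestrictedNMF.exists_isSolution [Fintype p] (h : HasRestrictedNMF (M.map f) d)
    {A : Matrix p (Fin r) F} {B : Matrix (Fin r) q F} {A' : Matrix (Fin r) p F}
    {B' : Matrix q (Fin r) F} (hM : M = A * B) (hA : A' * A = 1) (hB : B * B' = 1) :
    ∃ w : Fin d → Fin r → L, (NestedConeProblem.ofMatrix f A hB).IsSolution w := by
  obtain ⟨W, H, hW, hH, hWH, hr⟩ := h
  obtain ⟨X, hX⟩ := exists_eq_mul_of_rank_eq hWH hr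
  have hMf : M.map f = A.map f * B.map f := by rw [hM, Matrix.map_mul]
  have hAf : A'.map f * A.map f = 1 := by
    rw [← Matrix.map_mul, hA, Matrix.map_one f f.map_zero f.map_one]
  have hWY : A.map f * (B.map f * X) = W := by rw [hX, hMf, Matrix.mul_assoc]
  have hBY : B.map f = B.map f * X * H := by
    calc B.map f = A'.map f * (A.map f * B.map f) := by
          rw [← Matrix.mul_assoc, hAf, Matrix.one_mul]
      _ = A'.map f * (A.map f * (B.map f * X) * H) := by rw [← hMf, hWH, hWY]
      _ = A'.map f * A.map f * (B.map f * X * H) := by simp only [Matrix.mul_assoc]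
      _ = B.map f * X * H := by rw [hAf, Matrix.one_mul]
  exact ⟨_, (NestedConeProblem.ofMatrix_isSolution_iff f hB).2 ⟨hWY ▸ hW, H, hH, hBY⟩⟩

variable [LinearOrder F]

lemma hasRestrictedNMF_of_isRational (hf : StrictMono f) {A : Matrix p (Fin r) F}
    {B : Matrix (Fin r) q F} {B' : Matrix q (Fin r) F} (hM : M = A * B) (hB : B * B' = 1)
    (hr : r = M.rank) {w : Fin d → Fin r → L} (hw : ∀ k, IsRational f.fieldRange (w k))
    (hsol : (NestedConeProblem.ofMatrix f A hB).IsSolution w) : HasRestrictedNMF M d := by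
  choose H hH0 hHmem hH using fun j =>
    exists_coeff_mem_of_mem_hull hw ((NestedConeProblem.ofMatrix f A hB).gen_rational j)
      (hsol.mem j)
  choose H' hH' using hHmem
  choose w' hw' using hw
  let Q : Matrix (Fin r) (Fin d) F := of fun a k => w' k a
  have hBQ : B = Q * of fun k j => H' j k := by
    ext a j
    apply f.injective
    refine (congrFun (hH j) a).trans ?_
    simp [Q, Matrix.mul_apply, hw', hH', mul_comm]
  have hfac : M = A * Q * of fun k j => H' j k := by rw [Matrix.mul_assoc, ← hBQ, hM]
  refine ⟨A * Q, _, fun i k => hf.le_iff_le.1 ?_, fun k j => hf.le_iff_le.1 ?_, hfac,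
    le_antisymm ?_ ?_⟩
  · rw [f.map_zero]
    refine (hsol.nonneg i k).trans_eq ?_
    simp [NestedConeProblem.ofMatrix, Q, Matrix.mul_apply, dotProduct, hw']
  · rw [f.map_zero, of_apply, hH']
    exact hH0 j k
  · calc (A * Q).rank ≤ A.rank := rank_mul_le_left _ _
      _ ≤ M.rank := (A.rank_le_card_width).trans_eq (by rw [Fintype.card_fin, hr])
  · conv_lhs => rw [hfac]
    exact rank_mul_le_left _ _

variable [TopologicalSpace L] [OrderTopology L] [Finite p]

lemma hasRestrictedNMF_of_map (hf : StrictMono f) (hd : DenseRange f) (hr : M.rank ≤ 3)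
    (h : HasRestrictedNMF (M.map f) d) : HasRestrictedNMF M d := by
  cases nonempty_fintype p
  have hK : Dense (f.fieldRange : Set L) := by rwa [RingHom.coe_fieldRange]
  obtain ⟨A, B, A', B', hM, hA, hB⟩ := exists_rank_factorization M
  obtain ⟨w, hw⟩ := h.exists_isSolution hM hA hB
  obtain ⟨w, hw⟩ := NestedConeProblem.exists_isMaxSolution hw
  obtain ⟨q, hq, hqsol⟩ := NestedConeProblem.exists_isRational_isSolution hw.toIsSolution
    fun k => hw.isProjRational hr hK k
  exact hasRestrictedNMF_of_isRational hf hM hB rfl hq hqsol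

lemma hasRestrictedNMF_map_iff (hf : StrictMono f) (hd : DenseRange f) (hr : M.rank ≤ 3) :
    HasRestrictedNMF (M.map f) d ↔ HasRestrictedNMF M d := by
  refine ⟨hasRestrictedNMF_of_map hf hd hr, ?_⟩
  rintro ⟨W, H, hW, hH, hM, hrank⟩
  refine ⟨W.map f, H.map f, fun i k => ?_, fun k j => ?_, ?_, ?_⟩
  · exact f.map_zero ▸ hf.monotone (hW i k)
  · exact f.map_zero ▸ hf.monotone (hH k j)
  · rw [← Matrix.map_mul, ← hM]
  · rw [rank_map_eq_rank, rank_map_eq_rank, hrank]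

theorem restrictedNonnegRank_map (hf : StrictMono f) (hd : DenseRange f) (hr : M.rank ≤ 3) :
    restrictedNonnegRank (M.map f) = restrictedNonnegRank M := by
  simp only [restrictedNonnegRank, hasRestrictedNMF_map_iff hf hd hr]

end RestrictedNMF

lemma hasRestrictedNMF_width {F p : Type*} [Field F] [LinearOrder F] [IsStrictOrderedRing F] {m : ℕ}
    {M : Matrix p (Fin m) F} (hM : ∀ i j, 0 ≤ M i j) : HasRestrictedNMF M m :=
  ⟨M, 1, hM, fun k j => by rw [one_apply]; split_ifs <;> simp, (Matrix.mul_one M).symm, rfl⟩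

theorem stmt10_general {F L : Type*} [Field F] [LinearOrder F] [IsStrictOrderedRing F] [Field L]
    [LinearOrder L] [IsStrictOrderedRing L] [TopologicalSpace L] [OrderTopology L] {n m : ℕ}
    (f : F →+* L) (hf : StrictMono f) (hdense : DenseRange f) (M : Matrix (Fin n) (Fin m) F)
    (hMnn : ∀ i j, 0 ≤ M i j) (hrk : (M.map f).rank ≤ 3) (d : ℕ)
    (hd : d = restrictedNonnegRank (M.map f)) :
    HasRestrictedNMF M d ∧ restrictedNonnegRank M = restrictedNonnegRank (M.map f) := by
  have hr : M.rank ≤ 3 := (rank_map_eq_rank M f).symm.trans_le hrk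
  have h := restrictedNonnegRank_map hf hdense hr
  refine ⟨?_, h.symm⟩
  rw [hd, h]
  exact Nat.sInf_mem (s := {d | HasRestrictedNMF M d}) ⟨m, hasRestrictedNMF_width hMnn⟩

/-- For a nonnegative rational matrix `M` of rank at most 3, there is a rational
restricted NMF of inner dimension `d = rrk+(M)`; in particular the restricted
nonnegative ranks of `M` over `ℝ` and over `ℚ` coincide. -/
theorem stmt10 {n m : ℕ} (M : Matrix (Fin n) (Fin m) ℚ)
    (hMnn : ∀ i j, 0 ≤ M i j)
    (hrk : (M.map ((↑) : ℚ → ℝ)).rank ≤ 3)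
    (d : ℕ) (hd : d = rrkPos (M.map ((↑) : ℚ → ℝ))) :
    (∃ W : Matrix (Fin n) (Fin d) ℚ, ∃ H : Matrix (Fin d) (Fin m) ℚ,
      (∀ i k, 0 ≤ W i k) ∧ (∀ k j, 0 ≤ H k j) ∧ M = W * H ∧ W.rank = M.rank) ∧
    rrkPosQ M = rrkPos (M.map ((↑) : ℚ → ℝ)) :=
  stmt10_general (Rat.castHom ℝ) Rat.cast_strictMono Rat.denseRange_cast M hMnn hrk d hd
end

section
/- Let P ⊆ ℝ² be a convex polygon with rational vertices and let S ⊆ P be the convex hull of finitely many rational points. Let k be the minimum cardinality of a finite set of points of ℝ² whose convex hull Q satisfies S ⊆ Q ⊆ P. Then there exist k rational points q_1, …, q_k ∈ ℚ² with S ⊆ conv{q_1, …, q_k} ⊆ P. -/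
open Set

/-! If a nested polygon has at most two extreme points, then the points of `S` span a segment with
rational endpoints. Otherwise its extreme points can be listed cyclically, and nestedness then means
that the vertices lie in `P` and that every point of `S` lies to the left of every edge. Among all
such nested polygons take one with as many rational vertices as possible. A vertex in the interior
of `P` can be pushed outwards to a rational point. A vertex on an edge of `P` can be moved along
that edge to a rational point, unless the edge of the polygon arriving there passes through a point
of `S`; in that case it is the central projection of its predecessor from that point, and it is
rational if its predecessor is. So either all vertices are rational or none is.

In the latter case the parameters of the vertices on their edges are irrational, and each one is the
image of the preceding one under a Möbius transformation with rational coefficients. Going once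
around the polygon, the first parameter is a root of a rational quadratic, which vanishes
identically or changes sign there. Hence a nearby rational first parameter, carried along by the
Möbius transformations, gives a polygon with rational vertices whose last edge lies on the correct
side of `S`. -/

open AffineMap Filter Topology

section Orientation

variable {R : Type*} [CommRing R]

/-- The cross product (determinant) of two vectors of the plane. -/
def cross (v w : Fin 2 → R) : R :=
  v 0 * w 1 - v 1 * w 0

/-- Twice the signed area of the triangle `u v w`; it is positive exactly when `w` lies strictly to
the left of the directed line from `u` to `v`. -/
def orient (u v w : Fin 2 → R) : R :=
  cross (v - u) (w - u)

lemma cross_swap (v w : Fin 2 → R) : cross v w = -cross w v := by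
  simp only [cross]; ring

lemma cross_smul_left (c : R) (v w : Fin 2 → R) : cross (c • v) w = c * cross v w := by
  simp only [cross, Pi.smul_apply, smul_eq_mul]; ring

lemma cross_mul_cross (n e v w : Fin 2 → R) :
    cross n e * cross v w = cross n v * cross e w - cross n w * cross e v := by
  simp only [cross]; ring

@[simp]
lemma orient_self_left (u w : Fin 2 → R) : orient u u w = 0 := by
  simp [orient, cross]

@[simp]
lemma orient_self_right (u v : Fin 2 → R) : orient u v u = 0 := by
  simp [orient, cross]

@[simp]
lemma orient_self_mid (u v : Fin 2 → R) : orient u v v = 0 := by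
  simp only [orient, cross]; ring

lemma orient_eq_add_orient_add_orient (x u v w : Fin 2 → R) :
    orient u v w = orient x u v + orient x v w + orient x w u := by
  simp only [orient, cross, Pi.sub_apply]; ring

lemma orient_swap (u v w : Fin 2 → R) : orient u w v = -orient u v w :=
  cross_swap _ _

lemma orient_rotate (u v w : Fin 2 → R) : orient v w u = orient u v w := by
  simp only [orient, cross, Pi.sub_apply]; ring

lemma orient_lineMap (u v a b : Fin 2 → R) (t : R) :
    orient u v (lineMap a b t) = orient u v a + t * cross (v - u) (b - a) := by
  simp only [orient, cross, lineMap_apply, Pi.sub_apply, vsub_eq_sub, vadd_eq_add, Pi.add_apply,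
    Pi.smul_apply, smul_eq_mul]
  ring

lemma orient_lineMap_lineMap_self (u v : Fin 2 → R) (t t' : R) :
    orient (lineMap u v t) (lineMap u v t') v = 0 := by
  simp only [orient, cross, lineMap_apply, Pi.sub_apply, vsub_eq_sub, vadd_eq_add, Pi.add_apply,
    Pi.smul_apply, smul_eq_mul]
  ring

lemma orient_combo (u v x y : Fin 2 → R) {a b : R} (hab : a + b = 1) :
    orient u v (a • x + b • y) = a * orient u v x + b * orient u v y := by
  obtain rfl : a = 1 - b := eq_sub_of_add_eq hab
  simp only [orient, cross, Pi.sub_apply, Pi.add_apply, Pi.smul_apply, smul_eq_mul]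
  ring

lemma orient_lineMap_eq_combo (u v a b : Fin 2 → R) (t : R) :
    orient u v (lineMap a b t) = (1 - t) * orient u v a + t * orient u v b := by
  rw [lineMap_apply_module, orient_combo _ _ _ _ (sub_add_cancel 1 t)]

end Orientation

section HalfPlanes

lemma convex_preimage_orient (u v : Fin 2 → ℝ) {c : Set ℝ} (hc : Convex ℝ c) :
    Convex ℝ (orient u v ⁻¹' c) := by
  intro x hx y hy a b ha hb hab
  rw [mem_preimage, orient_combo u v x y hab]
  exact hc hx hy ha hb hab

@[fun_prop]
lemma continuous_orient {X : Type*} [TopologicalSpace X] {f g h : X → Fin 2 → ℝ}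
    (hf : Continuous f) (hg : Continuous g) (hh : Continuous h) :
    Continuous fun x => orient (f x) (g x) (h x) := by
  unfold orient cross
  fun_prop

lemma orient_nonneg_of_mem_segment {u v a b x : Fin 2 → ℝ} (hx : x ∈ segment ℝ a b)
    (ha : 0 ≤ orient u v a) (hb : 0 ≤ orient u v b) : 0 ≤ orient u v x :=
  (convex_preimage_orient u v (convex_Ici 0)).segment_subset ha hb hx

lemma isOpen_setOf_orient_pos_inter (a b c : Fin 2 → ℝ) :
    IsOpen ({x | 0 < orient a x c} ∩ {x | 0 < orient x b c}) :=
  (isOpen_lt continuous_const (by fun_prop)).inter (isOpen_lt continuous_const (by fun_prop))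

lemma mem_closure_setOf_orient_pos {a b c : Fin 2 → ℝ} (h : 0 < orient a b c) :
    b ∈ closure ({x | 0 < orient a x b} ∩ {x | 0 < orient x c b}) := by
  have htend : Tendsto (fun ε : ℝ => b + ε • ((b - a) + (b - c))) (𝓝[>] 0) (𝓝 b) := by
    refine Tendsto.mono_left ?_ nhdsWithin_le_nhds
    simpa using Continuous.tendsto (f := fun ε : ℝ => b + ε • ((b - a) + (b - c))) (by fun_prop) 0
  refine mem_closure_of_tendsto htend ?_
  filter_upwards [self_mem_nhdsWithin] with ε hε
  have hpos : 0 < ε * orient a b c := mul_pos hε h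
  refine ⟨hpos.trans_eq ?_, hpos.trans_eq ?_⟩ <;>
  · simp only [orient, cross, Pi.add_apply, Pi.sub_apply, Pi.smul_apply, smul_eq_mul]
    ring

lemma exists_lineMap_eq_of_orient_eq_zero {K : Type*} [Field K] {a b c : Fin 2 → K} (hab : a ≠ b)
    (h : orient a b c = 0) : ∃ r : K, lineMap a b r = c := by
  simp only [orient, cross, Pi.sub_apply] at h
  simp only [funext_iff, Fin.forall_fin_two, lineMap_apply, vsub_eq_sub,
    vadd_eq_add, Pi.add_apply, Pi.smul_apply, Pi.sub_apply, smul_eq_mul]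
  by_cases h0 : b 0 = a 0
  · have h1 : b 1 - a 1 ≠ 0 := fun h1 => hab (by
      ext x; fin_cases x
      exacts [h0.symm, (sub_eq_zero.1 h1).symm])
    refine ⟨(c 1 - a 1) / (b 1 - a 1), ?_, by field_simp; ring⟩
    rw [h0, sub_self, zero_mul, zero_sub, neg_eq_zero, mul_eq_zero] at h
    rw [h0, sub_self, mul_zero, zero_add, sub_eq_zero.1 (h.resolve_left h1)]
  · have h0 : b 0 - a 0 ≠ 0 := sub_ne_zero.2 h0
    refine ⟨(c 0 - a 0) / (b 0 - a 0), by field_simp; ring, ?_⟩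
    field_simp
    linear_combination -h

end HalfPlanes

section Slope

variable {ι : Type*} [Finite ι] {q : ι → Fin 2 → ℝ} {x : Fin 2 → ℝ}

lemma exists_forall_cross_pos_of_notMem_convexHull (hx : x ∉ convexHull ℝ (range q)) :
    ∃ n : Fin 2 → ℝ, ∀ i, 0 < cross n (q i - x) := by
  obtain ⟨f, c, hfx, hf⟩ := geometric_hahn_banach_point_closed (convex_convexHull ℝ (range q))
    ((finite_range q).isClosed_convexHull ℝ) hx
  set n : Fin 2 → ℝ := ![f (Pi.single 1 1), -f (Pi.single 0 1)]
  have hf_eq (v : Fin 2 → ℝ) : f v = cross n v := by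
    conv_lhs => rw [pi_eq_sum_univ' v, map_sum, Fin.sum_univ_two, map_smul, map_smul]
    simp only [cross, n, smul_eq_mul, Matrix.cons_val_zero, Matrix.cons_val_one,
      Matrix.cons_val_fin_one]
    ring
  refine ⟨n, fun i => ?_⟩
  rw [← hf_eq, map_sub, sub_pos]
  exact hfx.trans (hf _ (subset_convexHull ℝ _ (mem_range_self i)))

lemma exists_slope_of_notMem_convexHull (hx : x ∉ convexHull ℝ (range q)) :
    ∃ m : ι → ℝ, ∀ i l, 0 < orient x (q i) (q l) ↔ m i < m l := by
  obtain ⟨n, hn⟩ := exists_forall_cross_pos_of_notMem_convexHull hx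
  cases isEmpty_or_nonempty ι with
  | inl _ => exact ⟨fun _ => 0, isEmptyElim⟩
  | inr h =>
    obtain ⟨o⟩ := h
    refine ⟨fun i => cross (q o - x) (q i - x) / cross n (q i - x), fun i l => ?_⟩
    rw [div_lt_div_iff₀ (hn i) (hn l), orient, ← mul_pos_iff_of_pos_left (hn o),
      cross_mul_cross, sub_pos, mul_comm, mul_comm (cross n (q i - x))]

end Slope

section ConvexPosition

variable {ι : Type*} {q : ι → Fin 2 → ℝ}

lemma orient_ne_zero_of_convexIndependent (hq : ConvexIndependent ℝ q) {i j l : ι} (hij : i ≠ j)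
    (hjl : j ≠ l) (hli : l ≠ i) : orient (q i) (q j) (q l) ≠ 0 := by
  have notMem_segment {a b c : ι} (hca : c ≠ a) (hcb : c ≠ b) : ¬Wbtw ℝ (q a) (q c) (q b) := by
    intro h
    have hc : c ∈ ({a, b} : Set ι) :=
      hq {a, b} c (by rwa [image_pair, convexHull_pair, mem_segment_iff_wbtw])
    exact hc.elim hca hcb
  intro h
  obtain ⟨r, hr⟩ := exists_lineMap_eq_of_orient_eq_zero (hq.injective.ne hij) h
  have hcol : Collinear ℝ {q i, q j, q l} := by
    rw [pair_comm (q j), insert_comm, ← hr]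
    exact collinear_insert_of_mem_affineSpan_pair (lineMap_mem_affineSpan_pair _ _ _)
  rcases hcol.wbtw_or_wbtw_or_wbtw with h | h | h
  · exact notMem_segment hij.symm hjl h
  · exact notMem_segment hjl.symm hli h
  · exact notMem_segment hli.symm hij h

lemma exists_forall_orient_pos_of_convexIndependent [Finite ι] (hq : ConvexIndependent ℝ q) (i : ι)
    (hi : ∃ l, l ≠ i) : ∃ j ≠ i, ∀ l ≠ i, l ≠ j → 0 < orient (q i) (q j) (q l) := by
  have hqi : q i ∉ convexHull ℝ (range fun l : {l // l ≠ i} => q l) :=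
    fun h => hq {l | l ≠ i} i (by rw [image_eq_range]; exact h) rfl
  obtain ⟨m, hm⟩ := exists_slope_of_notMem_convexHull hqi
  have : Nonempty {l // l ≠ i} := hi.elim fun l hl => ⟨⟨l, hl⟩⟩
  obtain ⟨j, hj⟩ := Finite.exists_min m
  refine ⟨j, j.2, fun l hli hlj => (orient_ne_zero_of_convexIndependent hq j.2.symm hlj.symm
    hli).lt_or_gt.resolve_left fun h => ?_⟩
  rw [← neg_pos, ← orient_swap] at h
  exact ((hm ⟨l, hli⟩ j).1 h).not_ge (hj _)

end ConvexPosition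

section SameCycle

variable {ι : Type*} [Finite ι] {σ : Equiv.Perm ι}

lemma forall_of_sameCycle (hσ : ∀ i l, σ.SameCycle i l) {C : ι → Prop} {o : ι} (ho : C o)
    (hC : ∀ i, C i → C (σ i)) (i : ι) : C i := by
  obtain ⟨n, rfl⟩ := (hσ o i).exists_nat_pow_eq
  induction n with
  | zero => exact ho
  | succ n ih => rw [pow_succ', Equiv.Perm.mul_apply]; exact hC _ ih

lemma exists_apply_eq_of_sameCycle (hσ : ∀ i l, σ.SameCycle i l) {α : Type*} (o : ι) (x : α)
    (f : ι → α → α) : ∃ w : ι → α, w o = x ∧ ∀ i, σ i ≠ o → w (σ i) = f i (w i) := by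
  classical
  have hreach (i : ι) : ∃ n : ℕ, (σ ^ n) o = i := (hσ o i).exists_nat_pow_eq
  have hleast (i : ι) : ∃ n : ℕ, (σ ^ n) o = i ∧ ∀ m, (σ ^ m) o = i → n ≤ m :=
    ⟨_, Nat.find_spec (hreach i), fun _ => Nat.find_min' (hreach i)⟩
  choose n hn hle using hleast
  have ho : n o = 0 := Nat.le_zero.1 (hle o 0 rfl)
  have hsucc {i : ι} (hi : σ i ≠ o) : n (σ i) = n i + 1 := by
    refine (hle _ _ (by rw [pow_succ', Equiv.Perm.mul_apply, hn])).antisymm ?_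
    have h := hn (σ i)
    cases hk : n (σ i) with
    | zero => exact absurd (by simpa [hk] using h.symm) hi
    | succ k =>
      rw [hk, pow_succ', Equiv.Perm.mul_apply, σ.apply_eq_iff_eq] at h
      exact Nat.succ_le_succ (hle i k h)
  let walk : ℕ → α := Nat.rec x fun m y => f ((σ ^ m) o) y
  refine ⟨fun i => walk (n i), congrArg walk ho, fun i hi => ?_⟩
  calc walk (n (σ i)) = f ((σ ^ n i) o) (walk (n i)) := congrArg walk (hsucc hi)
    _ = f i (walk (n i)) := by rw [hn]

end SameCycle

section Polygon

variable {ι : Type*} {σ : Equiv.Perm ι} {q : ι → Fin 2 → ℝ}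

/-- The family `q` lists the vertices of a strictly convex polygon, possibly empty, in which the
edge leaving the vertex `q i` ends at `q (σ i)` and all other vertices lie strictly to its left. -/
structure IsConvexPolygon (σ : Equiv.Perm ι) (q : ι → Fin 2 → ℝ) : Prop where
  apply_apply_ne (i : ι) : σ (σ i) ≠ i
  orient_pos (i l : ι) (hi : l ≠ i) (hσ : l ≠ σ i) : 0 < orient (q i) (q (σ i)) (q l)

namespace IsConvexPolygon

lemma apply_ne (hq : IsConvexPolygon σ q) (i : ι) : σ i ≠ i := fun h =>
  hq.apply_apply_ne i (by rw [h, h])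

lemma orient_apply_apply_pos (hq : IsConvexPolygon σ q) (i : ι) :
    0 < orient (q i) (q (σ i)) (q (σ (σ i))) :=
  hq.orient_pos i _ (hq.apply_apply_ne i) (hq.apply_ne _)

lemma vertex_ne (hq : IsConvexPolygon σ q) (i : ι) : q i ≠ q (σ i) := fun h => by
  have := hq.orient_apply_apply_pos i
  rw [h, orient_self_left] at this
  exact this.false

lemma orient_nonneg (hq : IsConvexPolygon σ q) (i l : ι) : 0 ≤ orient (q i) (q (σ i)) (q l) := by
  rcases eq_or_ne l i with rfl | hi
  · rw [orient_self_right]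
  rcases eq_or_ne l (σ i) with rfl | hσ
  · rw [orient_self_mid]
  exact (hq.orient_pos i l hi hσ).le

-- If `x` were outside, the edge leaving the vertex of greatest slope from `x` would turn back.
lemma mem_convexHull_range [Finite ι] [Nonempty ι] (hq : IsConvexPolygon σ q) {x : Fin 2 → ℝ}
    (hx : ∀ i, 0 ≤ orient (q i) (q (σ i)) x) : x ∈ convexHull ℝ (range q) := by
  by_contra hx'
  obtain ⟨m, hm⟩ := exists_slope_of_notMem_convexHull hx'
  have orient_eq_zero {i l : ι} (h : m i = m l) : orient x (q i) (q l) = 0 := by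
    refine le_antisymm (not_lt.1 fun h' => ((hm i l).1 h').ne h) (not_lt.1 fun h' => ?_)
    rw [← neg_pos, ← orient_swap] at h'
    exact ((hm l i).1 h').ne' h
  have apply_eq {i : ι} (h : ∀ l, m l ≤ m i) : m (σ i) = m i := by
    refine (h _).antisymm (not_lt.1 fun h' => (hx i).not_gt ?_)
    rw [orient_rotate, orient_swap, neg_neg_iff_pos]
    exact (hm _ _).2 h'
  obtain ⟨i, hi⟩ := Finite.exists_max m
  have h1 : m (σ i) = m i := apply_eq hi
  have h2 : m (σ (σ i)) = m i := (apply_eq (i := σ i) (h1 ▸ hi)).trans h1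
  refine (hq.orient_apply_apply_pos i).ne' ?_
  rw [orient_eq_add_orient_add_orient x, orient_eq_zero h1.symm,
    orient_eq_zero (h1.trans h2.symm), orient_eq_zero h2, add_zero, add_zero]

lemma sameCycle [Finite ι] (hq : IsConvexPolygon σ q) (i l : ι) : σ.SameCycle i l := by
  let σ' : Equiv.Perm {j // σ.SameCycle i j} :=
    σ.subtypePerm fun _ => Equiv.Perm.sameCycle_apply_right
  have hq' : IsConvexPolygon σ' (fun j => q j) :=
    ⟨fun j h => hq.apply_apply_ne j (congrArg Subtype.val h), fun j l hj hσ =>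
      hq.orient_pos j l (Subtype.coe_ne_coe.2 hj) fun h => hσ (Subtype.ext h)⟩
  have : Nonempty {j // σ.SameCycle i j} := ⟨⟨i, .refl σ i⟩⟩
  have hmem : ∀ l, q l ∈ convexHull ℝ (range fun j : {j // σ.SameCycle i j} => q j) := fun l =>
    hq'.mem_convexHull_range fun j => hq.orient_nonneg j l
  by_contra hl
  have hpos : convexHull ℝ (range fun j : {j // σ.SameCycle i j} => q j) ⊆
      orient (q l) (q (σ l)) ⁻¹' Ioi 0 := by
    refine convexHull_min (range_subset_iff.2 fun j => hq.orient_pos _ _ ?_ ?_)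
      (convex_preimage_orient _ _ (convex_Ioi 0))
    · rintro rfl; exact hl j.2
    · intro h; exact hl (Equiv.Perm.sameCycle_apply_right.1 (h ▸ j.2))
  have h : 0 < orient (q l) (q (σ l)) (q l) := hpos (hmem l)
  exact h.ne' (orient_self_right _ _)

end IsConvexPolygon

lemma exists_isConvexPolygon_of_convexIndependent [Finite ι] (hq : ConvexIndependent ℝ q)
    (hι : 3 ≤ ENat.card ι) : ∃ σ, IsConvexPolygon σ q := by
  have exists_ne := ENat.exists_ne_ne_of_three_le hι
  choose f hfi hf using fun i => exists_forall_orient_pos_of_convexIndependent hq i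
    ((exists_ne i i).imp fun l => And.left)
  have hff (i : ι) : f (f i) ≠ i := fun h => by
    obtain ⟨l, hli, hlj⟩ := exists_ne i (f i)
    have h1 := hf i l hli hlj
    have h2 := hf (f i) l hlj (by rwa [h])
    rw [h, orient_rotate, orient_swap] at h2
    rw [orient_rotate] at h1
    linarith
  have hinj : f.Injective := fun i j hij => by
    by_contra hne
    have h1 := hf i j (Ne.symm hne) (hij ▸ (hfi j).symm)
    have h2 := hf j i hne (hij ▸ (hfi i).symm)
    rw [← hij, orient_rotate, orient_swap] at h2
    linarith
  exact ⟨.ofBijective f hinj.bijective_of_finite, hff, hf⟩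

end Polygon

section RationalPoints

/-- The point of the real plane with the given rational coordinates; a point is rational when it
belongs to `range ratPoint`. -/
def ratPoint (r : Fin 2 → ℚ) : Fin 2 → ℝ :=
  fun c => (r c : ℝ)

lemma ratPoint_injective : Function.Injective ratPoint :=
  Rat.cast_injective.comp_left

lemma denseRange_ratPoint : DenseRange ratPoint :=
  DenseRange.piMap fun _ => Rat.denseRange_cast

lemma cross_ratPoint_sub (a b c d : Fin 2 → ℚ) :
    cross (ratPoint b - ratPoint a) (ratPoint d - ratPoint c) = (cross (b - a) (d - c) : ℚ) := by
  simp only [cross, ratPoint, Pi.sub_apply]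
  push_cast
  ring

lemma orient_ratPoint (u v w : Fin 2 → ℚ) :
    orient (ratPoint u) (ratPoint v) (ratPoint w) = (orient u v w : ℚ) :=
  cross_ratPoint_sub u v u w

lemma lineMap_ratPoint (a b : Fin 2 → ℚ) (t : ℚ) :
    lineMap (ratPoint a) (ratPoint b) (t : ℝ) = ratPoint (lineMap a b t) := by
  ext c
  simp only [ratPoint, lineMap_apply_module, Pi.add_apply, Pi.smul_apply, smul_eq_mul]
  push_cast
  rfl

lemma lineMap_mem_range_ratPoint {u v a b : Fin 2 → ℚ} {t : ℝ}
    (h : orient (ratPoint u) (ratPoint v) (lineMap (ratPoint a) (ratPoint b) t) = 0)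
    (hne : cross (ratPoint v - ratPoint u) (ratPoint b - ratPoint a) ≠ 0) :
    lineMap (ratPoint a) (ratPoint b) t ∈ range ratPoint := by
  rw [orient_lineMap, orient_ratPoint] at h
  rw [cross_ratPoint_sub] at h hne
  have ht : t = ((-orient u v a / cross (v - u) (b - a) : ℚ) : ℝ) := by
    push_cast
    rw [eq_div_iff hne]
    linear_combination h
  rw [ht, lineMap_ratPoint]
  exact mem_range_self _

lemma exists_rat_mul_nonneg {p : ℝ → Prop} {t : ℝ} (hp : ∀ᶠ x in 𝓝 t, p x) (c : ℝ) :
    ∃ r : ℚ, p r ∧ 0 ≤ (r - t) * c := by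
  obtain ⟨ε, hε, hball⟩ := Metric.eventually_nhds_iff.1 hp
  rcases le_total 0 c with hc | hc
  · obtain ⟨r, hr, hr'⟩ := exists_rat_btwn (lt_add_of_pos_right t hε)
    refine ⟨r, hball ?_, mul_nonneg (sub_nonneg.2 hr.le) hc⟩
    rw [Real.dist_eq, abs_lt]
    constructor <;> linarith
  · obtain ⟨r, hr, hr'⟩ := exists_rat_btwn (sub_lt_self t hε)
    refine ⟨r, hball ?_, mul_nonneg_of_nonpos_of_nonpos (sub_nonpos.2 hr'.le) hc⟩
    rw [Real.dist_eq, abs_lt]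
    constructor <;> linarith

end RationalPoints

section LockedEdges

variable {κ : Type*} {P : Set (Fin 2 → ℝ)} {x y : Fin 2 → ℝ}

/-- Around `x`, the set `P` contains a piece of a line through two rational points. When these
points coincide, `x` is itself a rational point of `P`. -/
def OnRationalSegment (P : Set (Fin 2 → ℝ)) (x : Fin 2 → ℝ) : Prop :=
  ∃ (a b : Fin 2 → ℚ) (t : ℝ), lineMap (ratPoint a) (ratPoint b) t = x ∧
    ∀ᶠ t' in 𝓝 t, lineMap (ratPoint a) (ratPoint b) t' ∈ P

/-- The edge from `x` to `y` is locked: it passes through a point of `s`, while `y` can only be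
moved along a rational segment of `P` transversal to the edge. Moving `y` thus forces `x` to
move. -/
def IsLocked (P : Set (Fin 2 → ℝ)) (s : κ → Fin 2 → ℝ) (x y : Fin 2 → ℝ) : Prop :=
  ∃ (a b : Fin 2 → ℚ) (t : ℝ) (j : κ), lineMap (ratPoint a) (ratPoint b) t = y ∧
    (∀ᶠ t' in 𝓝 t, lineMap (ratPoint a) (ratPoint b) t' ∈ P) ∧
    orient x y (s j) = 0 ∧ cross (s j - x) (ratPoint b - ratPoint a) ≠ 0

lemma IsLocked.mem_range_ratPoint {s : κ → Fin 2 → ℚ} (h : IsLocked P (ratPoint ∘ s) x y)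
    (hx : x ∈ range ratPoint) : y ∈ range ratPoint := by
  obtain ⟨a, b, t, j, rfl, -, hj, hne⟩ := h
  obtain ⟨u, rfl⟩ := hx
  refine lineMap_mem_range_ratPoint (u := u) (v := s j) ?_ hne
  rw [orient_swap, neg_eq_zero]
  exact hj

end LockedEdges

section Nested

variable {ι κ : Type*} {P : Set (Fin 2 → ℝ)} {s : κ → Fin 2 → ℝ} {σ : Equiv.Perm ι}
  {q : ι → Fin 2 → ℝ}

/-- The convex polygon with vertices `q` is nested between the set `P` and the points `s`: its
vertices lie in `P`, and no point of `s` lies to the right of one of its edges. -/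
structure IsNested (P : Set (Fin 2 → ℝ)) (s : κ → Fin 2 → ℝ) (σ : Equiv.Perm ι)
    (q : ι → Fin 2 → ℝ) : Prop extends IsConvexPolygon σ q where
  mem (i : ι) : q i ∈ P
  orient_apply_nonneg (i : ι) (j : κ) : 0 ≤ orient (q i) (q (σ i)) (s j)

namespace IsNested

lemma eventually_isNested [Finite ι] [Finite κ] (hq : IsNested P s σ q) :
    ∀ᶠ q' in 𝓝 q, (∀ i, q' i ∈ P) →
      (∀ i j, orient (q i) (q (σ i)) (s j) = 0 → 0 ≤ orient (q' i) (q' (σ i)) (s j)) →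
      IsNested P s σ q' := by
  have hpos : ∀ᶠ q' in 𝓝 q, ∀ i l, l ≠ i → l ≠ σ i → 0 < orient (q' i) (q' (σ i)) (q' l) := by
    simp_rw [eventually_all]
    intro i l hi hσ
    exact (Continuous.tendsto (by fun_prop) q).eventually_const_lt (hq.orient_pos i l hi hσ)
  have hnonneg : ∀ᶠ q' in 𝓝 q, ∀ i j, orient (q i) (q (σ i)) (s j) ≠ 0 →
      0 < orient (q' i) (q' (σ i)) (s j) := by
    simp_rw [eventually_all]
    intro i j hne
    exact (Continuous.tendsto (by fun_prop) q).eventually_const_lt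
      ((hq.orient_apply_nonneg i j).lt_of_ne' hne)
  filter_upwards [hpos, hnonneg] with q' hpos hnonneg hmem htight
  refine ⟨⟨hq.apply_apply_ne, hpos⟩, hmem, fun i j => ?_⟩
  by_cases h : orient (q i) (q (σ i)) (s j) = 0
  exacts [htight i j h, (hnonneg i j h).le]

lemma mem_segment_of_orient_eq_zero (hq : IsNested P s σ q) {i : ι} {j : κ}
    (h : orient (q i) (q (σ i)) (s j) = 0) : s j ∈ segment ℝ (q i) (q (σ i)) := by
  obtain ⟨t, ht⟩ := exists_lineMap_eq_of_orient_eq_zero (hq.vertex_ne i) h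
  obtain ⟨k, rfl⟩ := σ.surjective i
  have h0 := hq.orient_apply_nonneg k j
  have h1 := hq.orient_apply_nonneg (σ (σ k)) j
  rw [← ht, orient_lineMap_eq_combo] at h0 h1
  rw [orient_self_mid, mul_zero, zero_add] at h0
  rw [orient_self_right, mul_zero, add_zero, orient_rotate] at h1
  rw [segment_eq_image_lineMap]
  exact ⟨t, ⟨nonneg_of_mul_nonneg_left h0 (hq.orient_apply_apply_pos k),
    sub_nonneg.1 (nonneg_of_mul_nonneg_left h1 (hq.orient_apply_apply_pos (σ k)))⟩, ht⟩

lemma eventually_update [Finite ι] [Finite κ] [DecidableEq ι] (hq : IsNested P s σ q) (i : ι) :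
    ∀ᶠ x in 𝓝 (q (σ i)), x ∈ P →
      (∀ j, orient (q i) (q (σ i)) (s j) = 0 → 0 ≤ orient (q i) x (s j)) →
      0 ≤ orient x (q (σ (σ i))) (q (σ i)) → IsNested P s σ (Function.update q (σ i) x) := by
  have htend : Tendsto (Function.update q (σ i)) (𝓝 (q (σ i))) (𝓝 q) := by
    simpa using (tendsto_const_nhds (x := q)).update (σ i) (tendsto_id (x := 𝓝 (q (σ i))))
  filter_upwards [htend.eventually hq.eventually_isNested] with x hx hxP hin hout
  refine hx (fun l => ?_) fun l j h => ?_
  · rcases eq_or_ne l (σ i) with rfl | hl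
    · rwa [Function.update_self]
    · rw [Function.update_of_ne hl]; exact hq.mem l
  rcases eq_or_ne l i with rfl | hli
  · rw [Function.update_self, Function.update_of_ne (hq.apply_ne l).symm]
    exact hin j h
  rw [Function.update_of_ne (σ.injective.ne hli)]
  rcases eq_or_ne l (σ i) with rfl | hl
  · rw [Function.update_self]
    exact orient_nonneg_of_mem_segment (hq.mem_segment_of_orient_eq_zero h) hout
      (orient_self_mid _ _).ge
  · rw [Function.update_of_ne hl, h]

lemma exists_update_ratPoint_of_mem_interior [Finite ι] [Finite κ] [DecidableEq ι]
    (hq : IsNested P s σ q) {i : ι} (hi : q (σ i) ∈ interior P) :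
    ∃ r, IsNested P s σ (Function.update q (σ i) (ratPoint r)) := by
  obtain ⟨U, hU, hUo, hiU⟩ := mem_nhds_iff.1
    (Filter.Eventually.and (mem_interior_iff_mem_nhds.1 hi) (hq.eventually_update i))
  obtain ⟨r, hrU, hin, hout⟩ := denseRange_ratPoint.exists_mem_open
    (hUo.inter (isOpen_setOf_orient_pos_inter (q i) (q (σ (σ i))) (q (σ i))))
    (mem_closure_iff.1 (mem_closure_setOf_orient_pos (hq.orient_apply_apply_pos i)) U hUo hiU)
  obtain ⟨hrP, hr⟩ := hU hrU
  refine ⟨r, hr hrP (fun j hj => ?_) hout.le⟩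
  exact orient_nonneg_of_mem_segment (hq.mem_segment_of_orient_eq_zero hj)
    (orient_self_right _ _).ge hin.le

lemma exists_update_ratPoint_of_lineMap_mem [Finite ι] [Finite κ] [DecidableEq ι]
    (hq : IsNested P s σ q) {i : ι} {a b : Fin 2 → ℚ} {t : ℝ}
    (ht : lineMap (ratPoint a) (ratPoint b) t = q (σ i))
    (hP : ∀ᶠ t' in 𝓝 t, lineMap (ratPoint a) (ratPoint b) t' ∈ P)
    (hfree : ∀ j, orient (q i) (q (σ i)) (s j) = 0 →
      cross (s j - q i) (ratPoint b - ratPoint a) = 0) :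
    ∃ r, IsNested P s σ (Function.update q (σ i) (ratPoint r)) := by
  have htend : Tendsto (lineMap (ratPoint a) (ratPoint b) : ℝ → _) (𝓝 t) (𝓝 (q (σ i))) :=
    ht ▸ lineMap_continuous.tendsto t
  obtain ⟨r, ⟨hrP, hr⟩, hr0⟩ := exists_rat_mul_nonneg
    (hP.and (htend.eventually (hq.eventually_update i)))
    (cross (q (σ i) - q (σ (σ i))) (ratPoint b - ratPoint a))
  refine ⟨lineMap a b r, lineMap_ratPoint a b r ▸ hr hrP (fun j hj => ?_) ?_⟩
  · have h0 : orient (q i) (s j) (lineMap (ratPoint a) (ratPoint b) t) = 0 := by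
      rw [ht, orient_swap, hj, neg_zero]
    rw [orient_lineMap, hfree j hj, mul_zero] at h0
    rw [orient_swap, orient_lineMap, hfree j hj, mul_zero, h0, neg_zero]
  · have h0 : orient (q (σ (σ i))) (q (σ i)) (lineMap (ratPoint a) (ratPoint b) t) = 0 := by
      rw [ht, orient_self_mid]
    rw [← orient_rotate, orient_lineMap]
    rw [orient_lineMap] at h0
    linarith

lemma exists_update_ratPoint_or_isLocked [Finite ι] [Finite κ] [DecidableEq ι]
    (hq : IsNested P s σ q) {i : ι}
    (hi : q (σ i) ∈ interior P ∨ OnRationalSegment P (q (σ i))) :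
    (∃ r, IsNested P s σ (Function.update q (σ i) (ratPoint r))) ∨
      IsLocked P s (q i) (q (σ i)) := by
  rcases hi with hi | ⟨a, b, t, ht, hP⟩
  · exact .inl (hq.exists_update_ratPoint_of_mem_interior hi)
  by_cases! hfree : ∀ j, orient (q i) (q (σ i)) (s j) = 0 →
      cross (s j - q i) (ratPoint b - ratPoint a) = 0
  · exact .inl (hq.exists_update_ratPoint_of_lineMap_mem ht hP hfree)
  · obtain ⟨j, hj, hne⟩ := hfree
    exact .inr ⟨a, b, t, j, ht, hP, hj, hne⟩

lemma exists_isNested_forall_update [Finite ι] [DecidableEq ι] (hq : IsNested P s σ q) :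
    ∃ q', IsNested P s σ q' ∧
      ∀ i r, IsNested P s σ (Function.update q' i (ratPoint r)) → q' i ∈ range ratPoint := by
  obtain ⟨q', hq', hmax⟩ := (toFinite {A : Set ι | ∃ q', IsNested P s σ q' ∧
    A = {i | q' i ∈ range ratPoint}}).exists_maximal ⟨_, q, hq, rfl⟩
  obtain ⟨q', hq', rfl⟩ := hq'
  refine ⟨q', hq', fun i r hr => hmax ⟨_, hr, rfl⟩ (fun l hl => ?_) ?_⟩
  · rcases eq_or_ne l i with rfl | hli
    · exact ⟨r, (Function.update_self l _ q').symm⟩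
    · rwa [mem_ofPred_eq, Function.update_of_ne hli]
  · exact ⟨r, (Function.update_self i _ q').symm⟩

lemma exists_isNested_forall_mem_range_or_forall_isLocked [Finite ι] [Finite κ]
    {s : κ → Fin 2 → ℚ} (hP : ∀ x ∈ P, x ∈ interior P ∨ OnRationalSegment P x)
    (hq : IsNested P (ratPoint ∘ s) σ q) :
    ∃ q', IsNested P (ratPoint ∘ s) σ q' ∧ ((∀ i, q' i ∈ range ratPoint) ∨
      (∀ i, q' i ∉ range ratPoint) ∧ ∀ i, IsLocked P (ratPoint ∘ s) (q' i) (q' (σ i))) := by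
  classical
  obtain ⟨q', hq', hmax⟩ := hq.exists_isNested_forall_update
  have mem_range_or (i : ι) :
      q' (σ i) ∈ range ratPoint ∨ IsLocked P (ratPoint ∘ s) (q' i) (q' (σ i)) :=
    (hq'.exists_update_ratPoint_or_isLocked (hP _ (hq'.mem _))).imp_left
      fun ⟨r, hr⟩ => hmax _ r hr
  refine ⟨q', hq', or_iff_not_imp_left.2 fun hne => ?_⟩
  have hirr : ∀ i, q' i ∉ range ratPoint := fun o ho =>
    hne (forall_of_sameCycle hq'.sameCycle ho fun i hi =>
      (mem_range_or i).elim id fun h => h.mem_range_ratPoint hi)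
  exact ⟨hirr, fun i => (mem_range_or i).resolve_left (hirr _)⟩

end IsNested

end Nested

section Mobius

variable {K : Type*} [Field K]

/-- The numerator of the Möbius transformation `mobius M`. -/
def mobiusNum (M : Matrix (Fin 2) (Fin 2) ℚ) (x : K) : K :=
  M 0 0 * x + M 0 1

/-- The denominator of the Möbius transformation `mobius M`. -/
def mobiusDen (M : Matrix (Fin 2) (Fin 2) ℚ) (x : K) : K :=
  M 1 0 * x + M 1 1

/-- The Möbius transformation of a field given by a rational matrix, with value `0` at its pole. -/
def mobius (M : Matrix (Fin 2) (Fin 2) ℚ) (x : K) : K :=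
  mobiusNum M x / mobiusDen M x

@[simp]
lemma mobiusDen_one (x : K) : mobiusDen 1 x = 1 := by
  simp [mobiusDen]

@[simp]
lemma mobius_one (x : K) : mobius 1 x = x := by
  simp [mobius, mobiusNum]

variable [CharZero K] (M W : Matrix (Fin 2) (Fin 2) ℚ)

lemma mobius_ratCast (r : ℚ) : mobius M (r : K) = (mobius M r : ℚ) := by
  simp [mobius, mobiusNum, mobiusDen]

variable {W} {x : K}

lemma mobiusNum_mobius (hx : mobiusDen W x ≠ 0) :
    mobiusNum M (mobius W x) = mobiusNum (M * W) x / mobiusDen W x := by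
  rw [eq_div_iff hx, mobiusNum, add_mul, mul_assoc, mobius, div_mul_cancel₀ _ hx]
  simp only [mobiusNum, mobiusDen, Matrix.mul_apply, Fin.sum_univ_two, Rat.cast_add, Rat.cast_mul]
  ring

lemma mobiusDen_mobius (hx : mobiusDen W x ≠ 0) :
    mobiusDen M (mobius W x) = mobiusDen (M * W) x / mobiusDen W x := by
  rw [eq_div_iff hx, mobiusDen, add_mul, mul_assoc, mobius, div_mul_cancel₀ _ hx]
  simp only [mobiusNum, mobiusDen, Matrix.mul_apply, Fin.sum_univ_two, Rat.cast_add, Rat.cast_mul]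
  ring

lemma mobius_mobius (hx : mobiusDen W x ≠ 0) : mobius M (mobius W x) = mobius (M * W) x := by
  rw [mobius, mobiusNum_mobius M hx, mobiusDen_mobius M hx, div_div_div_cancel_right₀ hx, mobius]

variable {M} in
lemma mobiusDen_mul_ne_zero (hx : mobiusDen W x ≠ 0) (hM : mobiusDen M (mobius W x) ≠ 0) :
    mobiusDen (M * W) x ≠ 0 := by
  rw [mobiusDen_mobius M hx] at hM
  exact (div_ne_zero_iff.1 hM).1

@[fun_prop]
lemma continuous_mobiusNum : Continuous (mobiusNum M : ℝ → ℝ) := by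
  unfold mobiusNum
  fun_prop

@[fun_prop]
lemma continuous_mobiusDen : Continuous (mobiusDen M : ℝ → ℝ) := by
  unfold mobiusDen
  fun_prop

lemma continuousAt_mobius {M : Matrix (Fin 2) (Fin 2) ℚ} {x : ℝ} (hx : mobiusDen M x ≠ 0) :
    ContinuousAt (mobius M) x :=
  (continuous_mobiusNum M).continuousAt.div (continuous_mobiusDen M).continuousAt hx

end Mobius

section ClosedChain

-- An irrational root of a rational quadratic is simple unless the quadratic vanishes identically.
lemma exists_rat_quadratic_mul_nonneg {t : ℝ} (ht : Irrational t) {a b c : ℚ}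
    (h : a * t ^ 2 + b * t + c = 0) {p : ℝ → Prop} (hp : ∀ᶠ x in 𝓝 t, p x) (e : ℝ) :
    ∃ r : ℚ, p r ∧ 0 ≤ (a * (r : ℝ) ^ 2 + b * r + c) * e := by
  by_cases hslope : 2 * a * t + b = 0
  · have ha : a = 0 := by
      by_contra ha
      refine ht ⟨-b / (2 * a), ?_⟩
      push_cast
      rw [div_eq_iff (by simpa using ha)]
      linear_combination -hslope
    have hb : b = 0 := by simpa [ha] using hslope
    have hc : c = 0 := by simpa [ha, hb] using h
    obtain ⟨r, hr, -⟩ := exists_rat_mul_nonneg hp 0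
    exact ⟨r, hr, by simp [ha, hb, hc]⟩
  · have hsign : ∀ᶠ x in 𝓝 t, 0 < (a * (x + t) + b) * (2 * a * t + b) := by
      refine (Continuous.tendsto (by fun_prop) t).eventually_const_lt ?_
      rw [← two_mul, ← mul_assoc, mul_comm (a : ℝ) 2]
      exact mul_self_pos.2 hslope
    obtain ⟨r, ⟨hr, hpos⟩, hr0⟩ := exists_rat_mul_nonneg (hp.and hsign) ((2 * a * t + b) * e)
    have hfactor : a * (r : ℝ) ^ 2 + b * r + c = (r - t) * (a * (r + t) + b) := by
      linear_combination h
    refine ⟨r, hr, nonneg_of_mul_nonneg_left ?_ (show 0 < (2 * a * t + b) ^ 2 by positivity)⟩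
    calc 0 ≤ (a * (r + t) + b) * (2 * a * t + b) * ((r - t) * ((2 * a * t + b) * e)) :=
          mul_nonneg hpos.le hr0
      _ = _ := by rw [hfactor]; ring

lemma exists_rat_mul_mobiusDen_sub_nonneg {t : ℝ} (ht : Irrational t)
    {V : Matrix (Fin 2) (Fin 2) ℚ} (hden : mobiusDen V t ≠ 0) (hV : mobius V t = t)
    {p : ℝ → Prop} (hp : ∀ᶠ x in 𝓝 t, p x) (e : ℝ) :
    ∃ r : ℚ, p r ∧ 0 ≤ (r * mobiusDen V (r : ℝ) - mobiusNum V (r : ℝ)) * e := by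
  have hquad (x : ℝ) : x * mobiusDen V x - mobiusNum V x =
      (V 1 0 : ℚ) * x ^ 2 + (V 1 1 - V 0 0 : ℚ) * x + (-V 0 1 : ℚ) := by
    simp only [mobiusDen, mobiusNum]
    push_cast
    ring
  simp_rw [hquad]
  refine exists_rat_quadratic_mul_nonneg ht ?_ hp e
  rw [← hquad, sub_eq_zero]
  exact ((div_eq_iff hden).1 hV).symm

variable {ι : Type*} [Finite ι] {σ : Equiv.Perm ι} {M : ι → Matrix (Fin 2) (Fin 2) ℚ} {t : ι → ℝ}

lemma exists_mobius_chain (hσ : ∀ i l, σ.SameCycle i l) (hden : ∀ i, mobiusDen (M i) (t i) ≠ 0)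
    (hM : ∀ i, mobius (M i) (t i) = t (σ i)) (o : ι) :
    ∃ W : ι → Matrix (Fin 2) (Fin 2) ℚ, W o = 1 ∧ (∀ i, σ i ≠ o → W (σ i) = M i * W i) ∧
      ∀ i, mobiusDen (W i) (t o) ≠ 0 ∧ mobius (W i) (t o) = t i := by
  obtain ⟨W, hWo, hW⟩ := exists_apply_eq_of_sameCycle hσ o 1 fun i V => M i * V
  refine ⟨W, hWo, hW, forall_of_sameCycle hσ (o := o) ?_ fun i ⟨hi, hti⟩ => ?_⟩
  · simp [hWo]
  rcases eq_or_ne (σ i) o with ho | ho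
  · simp [ho, hWo]
  · rw [hW i ho, ← mobius_mobius _ hi, hti]
    exact ⟨mobiusDen_mul_ne_zero hi (hti ▸ hden i), hM i⟩

-- Solving along the cycle makes every relation but the last an equality; the last one becomes a
-- quadratic inequality in the first unknown, with an irrational root at `t o`.
lemma exists_rat_mobius_chain_le (hσ : ∀ i l, σ.SameCycle i l)
    (hden : ∀ i, mobiusDen (M i) (t i) ≠ 0) (hM : ∀ i, mobius (M i) (t i) = t (σ i)) {o : ι}
    (ho : Irrational (t o)) {p : (ι → ℝ) → Prop} (hp : ∀ᶠ t' in 𝓝 t, p t') :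
    ∃ r : ι → ℚ, p (fun i => r i) ∧
      ∀ i, mobiusNum (M i) (r i : ℝ) ≤ r (σ i) * mobiusDen (M i) (r i : ℝ) := by
  obtain ⟨W, hWo, hW, hWt⟩ := exists_mobius_chain hσ hden hM o
  obtain ⟨l, rfl⟩ := σ.surjective o
  have htend : Tendsto (fun x i => mobius (W i) x) (𝓝 (t (σ l))) (𝓝 t) := tendsto_pi_nhds.2
    fun i => by simpa only [(hWt i).2] using (continuousAt_mobius (hWt i).1).tendsto
  have hdenM : ∀ᶠ t' in 𝓝 t, ∀ i, mobiusDen (M i) (t' i) ≠ 0 := eventually_all.2 fun i =>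
    (Continuous.tendsto (by fun_prop) t).eventually_ne (hden i)
  have hdenW : ∀ᶠ x in 𝓝 (t (σ l)), ∀ i, mobiusDen (W i) x ≠ 0 := eventually_all.2 fun i =>
    (Continuous.tendsto (by fun_prop) _).eventually_ne (hWt i).1
  have hsign : ∀ᶠ x in 𝓝 (t (σ l)), 0 < mobiusDen (W l) x * mobiusDen (W l) (t (σ l)) :=
    (Continuous.tendsto (by fun_prop) _).eventually_const_lt (mul_self_pos.2 (hWt l).1)
  obtain ⟨x, ⟨⟨hpx, hdenx⟩, hWx, hx⟩, hquad⟩ := exists_rat_mul_mobiusDen_sub_nonneg ho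
    (mobiusDen_mul_ne_zero (hWt l).1 ((hWt l).2 ▸ hden l))
    (by rw [← mobius_mobius _ (hWt l).1, (hWt l).2, hM])
    ((htend.eventually (hp.and hdenM)).and (hdenW.and hsign)) (mobiusDen (W l) (t (σ l)))
  simp_rw [mobius_ratCast] at hpx hdenx
  refine ⟨fun i => mobius (W i) x, hpx, fun i => ?_⟩
  rcases eq_or_ne (σ i) (σ l) with hi | hi
  · obtain rfl := σ.injective hi
    simp only [← mobius_ratCast, hWo, mobius_one, mobiusNum_mobius _ (hWx i),
      mobiusDen_mobius _ (hWx i)]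
    rw [← sub_nonneg, mul_div_assoc', ← sub_div, ← mul_div_mul_right _ _ (hWt i).1]
    exact div_nonneg hquad hx.le
  · refine ((div_eq_iff (hdenx i)).1 ?_).le
    simp only [← mobius_ratCast, hW i hi, ← mobius_mobius _ (hWx i)]
    rfl

end ClosedChain

section EdgeMatrix

/-- The matrix of the projective map between the lines `a b` and `a' b'` that sends the parameter
of a point to the parameter of its image under central projection from `w`. -/
def edgeMatrix (a b a' b' w : Fin 2 → ℚ) : Matrix (Fin 2) (Fin 2) ℚ :=
  !![orient a a' w - orient b a' w, -orient a a' w;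
    orient a a' w - orient b a' w - orient a b' w + orient b b' w, orient a b' w - orient a a' w]

variable (a b a' b' w : Fin 2 → ℚ)

lemma orient_lineMap_lineMap_ratPoint (y y' : ℝ) :
    orient (lineMap (ratPoint a) (ratPoint b) y) (lineMap (ratPoint a') (ratPoint b') y')
      (ratPoint w) =
      y' * mobiusDen (edgeMatrix a b a' b' w) y - mobiusNum (edgeMatrix a b a' b' w) y := by
  simp only [mobiusNum, mobiusDen, edgeMatrix, orient, cross, ratPoint, lineMap_apply, vsub_eq_sub,
    vadd_eq_add, smul_eq_mul, Pi.sub_apply, Pi.add_apply, Pi.smul_apply, Matrix.of_apply,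
    Matrix.cons_val', Matrix.cons_val_zero, Matrix.cons_val_one, Matrix.cons_val_fin_one]
  push_cast
  ring

lemma mobiusDen_edgeMatrix (y : ℝ) :
    mobiusDen (edgeMatrix a b a' b' w) y =
      -cross (ratPoint w - lineMap (ratPoint a) (ratPoint b) y) (ratPoint b' - ratPoint a') := by
  simp only [mobiusDen, edgeMatrix, orient, cross, ratPoint, lineMap_apply, vsub_eq_sub,
    vadd_eq_add, smul_eq_mul, Pi.sub_apply, Pi.add_apply, Pi.smul_apply, Matrix.of_apply,
    Matrix.cons_val', Matrix.cons_val_zero, Matrix.cons_val_one, Matrix.cons_val_fin_one]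
  push_cast
  ring

variable {a b} {w' : Fin 2 → ℚ} {x : Fin 2 → ℝ} {t : ℝ}

lemma eq_of_orient_ratPoint_eq_zero (ht : lineMap (ratPoint a) (ratPoint b) t ∉ range ratPoint)
    (hx : x ≠ lineMap (ratPoint a) (ratPoint b) t)
    (hw : orient x (lineMap (ratPoint a) (ratPoint b) t) (ratPoint w) = 0)
    (hw' : orient x (lineMap (ratPoint a) (ratPoint b) t) (ratPoint w') = 0)
    (hne : cross (ratPoint w - x) (ratPoint b - ratPoint a) ≠ 0) : w' = w := by
  obtain ⟨τ, hτ⟩ := exists_lineMap_eq_of_orient_eq_zero hx hw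
  obtain ⟨τ', hτ'⟩ := exists_lineMap_eq_of_orient_eq_zero hx hw'
  set y := lineMap (ratPoint a) (ratPoint b) t
  by_contra hww
  have hττ : τ' ≠ τ := by
    rintro rfl
    exact hww (ratPoint_injective (hτ'.symm.trans hτ))
  refine ht (lineMap_mem_range_ratPoint (u := w) (v := w') ?_ ?_)
  · rw [← hτ, ← hτ', orient_lineMap_lineMap_self]
  · have hsub : ratPoint w' - ratPoint w = (τ' - τ) • (y - x) := by
      rw [← hτ, ← hτ', lineMap_apply_module', lineMap_apply_module', add_sub_add_right_eq_sub,
        ← sub_smul]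
    have hsub' : ratPoint w - x = τ • (y - x) := by
      rw [← hτ, lineMap_apply_module', add_sub_cancel_right]
    rw [hsub', cross_smul_left] at hne
    rw [hsub, cross_smul_left]
    exact mul_ne_zero (sub_ne_zero.2 hττ) (right_ne_zero_of_mul hne)

end EdgeMatrix

namespace IsNested

variable {ι κ : Type*} [Finite ι] [Finite κ] {P : Set (Fin 2 → ℝ)} {s : κ → Fin 2 → ℚ}
  {σ : Equiv.Perm ι} {q : ι → Fin 2 → ℝ}

lemma exists_ratPoint_of_isLocked [Nonempty ι] (hq : IsNested P (ratPoint ∘ s) σ q)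
    (hirr : ∀ i, q i ∉ range ratPoint)
    (hlock : ∀ i, IsLocked P (ratPoint ∘ s) (q i) (q (σ i))) :
    ∃ r : ι → Fin 2 → ℚ, IsNested P (ratPoint ∘ s) σ (ratPoint ∘ r) := by
  have hlock' (i : ι) : IsLocked P (ratPoint ∘ s) (q (σ.symm i)) (q i) := by
    simpa using hlock (σ.symm i)
  choose a b t j ht hP hj hne using hlock'
  replace hj (i : ι) : orient (q i) (q (σ i)) (ratPoint (s (j (σ i)))) = 0 := by
    simpa using hj (σ i)
  replace hne (i : ι) : cross (ratPoint (s (j (σ i))) - q i)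
      (ratPoint (b (σ i)) - ratPoint (a (σ i))) ≠ 0 := by
    simpa using hne (σ i)
  have hirr_t (i : ι) : Irrational (t i) := by
    rintro ⟨r, hr⟩
    exact hirr i ⟨_, by rw [← ht i, ← hr, lineMap_ratPoint]⟩
  set M : ι → Matrix (Fin 2) (Fin 2) ℚ := fun i =>
    edgeMatrix (a i) (b i) (a (σ i)) (b (σ i)) (s (j (σ i)))
  have hden (i : ι) : mobiusDen (M i) (t i) ≠ 0 := by
    rw [mobiusDen_edgeMatrix, ht]
    exact neg_ne_zero.2 (hne i)
  have hM (i : ι) : mobius (M i) (t i) = t (σ i) := by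
    rw [mobius, div_eq_iff (hden i), eq_comm, ← sub_eq_zero, ← orient_lineMap_lineMap_ratPoint, ht,
      ht, hj]
  have htend : Tendsto (fun t' i => lineMap (ratPoint (a i)) (ratPoint (b i)) (t' i))
      (𝓝 t) (𝓝 q) :=
    tendsto_pi_nhds.2 fun i => ht i ▸ (lineMap_continuous.comp (continuous_apply i)).tendsto t
  have hmem : ∀ᶠ t' in 𝓝 t, ∀ i, lineMap (ratPoint (a i)) (ratPoint (b i)) (t' i) ∈ P :=
    eventually_all.2 fun i => (continuous_apply i).tendsto t |>.eventually (hP i)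
  obtain ⟨r, ⟨hrP, hr⟩, hle⟩ := exists_rat_mobius_chain_le hq.sameCycle hden hM
    (hirr_t (Classical.arbitrary ι)) (hmem.and (htend.eventually hq.eventually_isNested))
  have hcomp : (ratPoint ∘ fun i => lineMap (a i) (b i) (r i)) =
      fun i => lineMap (ratPoint (a i)) (ratPoint (b i)) (r i : ℝ) :=
    funext fun i => (lineMap_ratPoint _ _ _).symm
  refine ⟨fun i => lineMap (a i) (b i) (r i), hcomp ▸ hr hrP fun i l hl => ?_⟩
  have hsl : s l = s (j (σ i)) := eq_of_orient_ratPoint_eq_zero _ (ht (σ i) ▸ hirr (σ i))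
    (ht (σ i) ▸ hq.vertex_ne i) (ht (σ i) ▸ hj i) (ht (σ i) ▸ hl) (hne i)
  rw [Function.comp_apply, hsl, orient_lineMap_lineMap_ratPoint, sub_nonneg]
  exact hle i

lemma exists_ratPoint (hP : ∀ x ∈ P, x ∈ interior P ∨ OnRationalSegment P x)
    (hq : IsNested P (ratPoint ∘ s) σ q) :
    ∃ r : ι → Fin 2 → ℚ, IsNested P (ratPoint ∘ s) σ (ratPoint ∘ r) := by
  cases isEmpty_or_nonempty ι with
  | inl _ => exact ⟨isEmptyElim, by convert hq⟩
  | inr _ =>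
    obtain ⟨q', hq', hrat | ⟨hirr, hlock⟩⟩ :=
      hq.exists_isNested_forall_mem_range_or_forall_isLocked hP
    · choose r hr using hrat
      exact ⟨r, (funext hr : ratPoint ∘ r = q') ▸ hq'⟩
    · exact hq'.exists_ratPoint_of_isLocked hirr hlock

end IsNested

section RationalHull

variable {P : Set (Fin 2 → ℝ)} {x : Fin 2 → ℝ}

lemma onRationalSegment_of_mem_openSegment (hP : Convex ℝ P) {a b : Fin 2 → ℚ}
    (ha : ratPoint a ∈ P) (hb : ratPoint b ∈ P)
    (hx : x ∈ openSegment ℝ (ratPoint a) (ratPoint b)) : OnRationalSegment P x := by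
  rw [openSegment_eq_image_lineMap] at hx
  obtain ⟨t, ht, rfl⟩ := hx
  refine ⟨a, b, t, rfl, ?_⟩
  filter_upwards [Icc_mem_nhds ht.1 ht.2] with t' ht'
  exact hP.lineMap_mem ha hb ht'

lemma mem_interior_convexHull_range_of_affineIndependent {ι : Type*} [Fintype ι]
    {z : ι → Fin 2 → ℝ} (hz : AffineIndependent ℝ z) (hι : Fintype.card ι = 3) {w : ι → ℝ}
    (hw : ∀ i, 0 < w i) (hw1 : ∑ i, w i = 1) :
    ∑ i, w i • z i ∈ interior (convexHull ℝ (range z)) := by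
  have htop : affineSpan ℝ (range z) = ⊤ := by
    rw [hz.affineSpan_eq_top_iff_card_eq_finrank_add_one, Module.finrank_fin_fun, hι]
  let b : AffineBasis ι ℝ (Fin 2 → ℝ) := ⟨z, hz, htop⟩
  have hb : ∑ i, w i • z i = Finset.univ.affineCombination ℝ b w :=
    (Finset.affineCombination_eq_linear_combination _ _ _ hw1).symm
  have hint : interior (convexHull ℝ (range z)) = {x | ∀ i, 0 < b.coord i x} :=
    b.interior_convexHull
  rw [hint, hb]
  intro i
  rw [b.coord_apply_combination_of_mem (Finset.mem_univ i) hw1]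
  exact hw i

lemma mem_interior_or_onRationalSegment_of_mem_convexHull {α : Type*} {p : α → Fin 2 → ℚ}
    (hx : x ∈ convexHull ℝ (range (ratPoint ∘ p))) :
    x ∈ interior (convexHull ℝ (range (ratPoint ∘ p))) ∨
      OnRationalSegment (convexHull ℝ (range (ratPoint ∘ p))) x := by
  classical
  obtain ⟨ι, _, z, w, hz, hind, hw, hw1, rfl⟩ := eq_pos_convex_span_of_mem_convexHull hx
  have hzP (i : ι) : z i ∈ convexHull ℝ (range (ratPoint ∘ p)) :=
    subset_convexHull ℝ _ (hz (mem_range_self i))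
  choose l hl using fun i => hz (mem_range_self i)
  obtain rfl : ratPoint ∘ p ∘ l = z := funext hl
  have onRationalSegment_of_mem {i j : ι} {y : Fin 2 → ℝ}
      (hy : y ∈ openSegment ℝ (ratPoint (p (l i))) (ratPoint (p (l j)))) :
      OnRationalSegment (convexHull ℝ (range (ratPoint ∘ p))) y :=
    onRationalSegment_of_mem_openSegment (convex_convexHull ℝ _) (hzP i) (hzP j) hy
  have hcard : Fintype.card ι ≤ 3 := calc
    Fintype.card ι ≤ Module.finrank ℝ (vectorSpan ℝ (range (ratPoint ∘ p ∘ l))) + 1 :=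
      hind.card_le_finrank_succ
    _ ≤ 3 := by grw [Submodule.finrank_le, Module.finrank_fin_fun]
  have hne : Fintype.card ι ≠ 0 := fun h => by
    rw [Fintype.card_eq_zero_iff] at h
    simp at hw1
  obtain h | h | h : Fintype.card ι = 1 ∨ Fintype.card ι = 2 ∨ Fintype.card ι = 3 := by omega
  · obtain ⟨i, hi⟩ := Finset.card_eq_one.1 (Finset.card_univ.trans h)
    rw [hi, Finset.sum_singleton] at hw1 ⊢
    refine .inr (onRationalSegment_of_mem (i := i) (j := i) ?_)
    rw [openSegment_same, hw1, one_smul]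
    exact mem_singleton _
  · obtain ⟨i, j, hij, hι⟩ := Finset.card_eq_two.1 (Finset.card_univ.trans h)
    rw [hι, Finset.sum_pair hij] at hw1 ⊢
    exact .inr (onRationalSegment_of_mem ⟨w i, w j, hw i, hw j, hw1, rfl⟩)
  · exact .inl (interior_mono (convexHull_mono hz)
      (mem_interior_convexHull_range_of_affineIndependent hind h hw hw1))

end RationalHull

section SmallHull

variable {E : Type*} [NormedAddCommGroup E] [NormedSpace ℝ E]

lemma mem_segment_of_dist_le {x y a b c : E} (ha : a ∈ segment ℝ x y) (hb : b ∈ segment ℝ x y)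
    (hc : c ∈ segment ℝ x y) (hac : dist x a ≤ dist x c) (hbc : dist b y ≤ dist c y) :
    c ∈ segment ℝ a b := by
  rcases eq_or_ne x y with rfl | hxy
  · rw [segment_same, mem_singleton_iff] at ha hb hc
    rw [ha, hb, hc]
    exact left_mem_segment ℝ x x
  rw [segment_eq_image_lineMap] at ha hb hc
  obtain ⟨s, hs, rfl⟩ := ha
  obtain ⟨u, hu, rfl⟩ := hb
  obtain ⟨t, ht, rfl⟩ := hc
  have hd : 0 < dist x y := dist_pos.2 hxy
  rw [dist_left_lineMap, dist_left_lineMap, mul_le_mul_iff_of_pos_right hd,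
    Real.norm_of_nonneg hs.1, Real.norm_of_nonneg ht.1] at hac
  rw [dist_lineMap_right, dist_lineMap_right, mul_le_mul_iff_of_pos_right hd,
    Real.norm_of_nonneg (sub_nonneg.2 hu.2), Real.norm_of_nonneg (sub_nonneg.2 ht.2),
    sub_le_sub_iff_left] at hbc
  rw [← image_segment ℝ (lineMap x y) s u, segment_eq_Icc (hac.trans hbc)]
  exact mem_image_of_mem _ ⟨hac, hbc⟩

lemma exists_univ_eq_pair_of_card_lt_three {ι : Type*} [Nonempty ι] (hι : ENat.card ι < 3) :
    ∃ i j : ι, (univ : Set ι) = {i, j} := by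
  by_contra! h
  have exists_ne (i j : ι) : ∃ l, l ≠ i ∧ l ≠ j := by
    by_contra! hl
    exact h i j (eq_univ_of_forall fun l => or_iff_not_imp_left.2 (hl l)).symm
  obtain ⟨i⟩ := ‹Nonempty ι›
  obtain ⟨j, hji, -⟩ := exists_ne i i
  obtain ⟨l, hli, hlj⟩ := exists_ne i j
  refine hι.not_ge ?_
  rw [← encard_univ, ← encard_eq_three.2 ⟨i, j, l, hji.symm, hli.symm, hlj.symm, rfl⟩]
  exact encard_le_encard (subset_univ _)

lemma exists_range_subset_convexHull_range_comp {ι κ : Type*} [Nonempty ι] [Finite κ] [Nonempty κ]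
    (hι : ENat.card ι < 3) {q : ι → E} {z : κ → E} (hz : range z ⊆ convexHull ℝ (range q)) :
    ∃ r : ι → κ, range z ⊆ convexHull ℝ (range (z ∘ r)) := by
  obtain ⟨i, i', hι⟩ := exists_univ_eq_pair_of_card_lt_three hι
  choose r hr using fun i => Finite.exists_min fun j => dist (q i) (z j)
  refine ⟨r, range_subset_iff.2 fun j => ?_⟩
  rw [← image_univ (f := q), hι, image_pair, convexHull_pair, range_subset_iff] at hz
  rw [← image_univ, hι, image_pair, convexHull_pair]
  refine mem_segment_of_dist_le (hz _) (hz _) (hz j) (hr i j) ?_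
  rw [dist_comm _ (q i'), dist_comm _ (q i')]
  exact hr i' j

end SmallHull

section ConvexIndependent

lemma exists_surjective_convexIndependent {ι E : Type*} [Finite ι] [Nonempty ι]
    [NormedAddCommGroup E] [NormedSpace ℝ E] (q : ι → E) :
    ∃ (V : Set E) (f : ι → V), f.Surjective ∧ ConvexIndependent ℝ ((↑) : V → E) ∧
      convexHull ℝ V = convexHull ℝ (range q) := by
  have hVq : (convexHull ℝ (range q)).extremePoints ℝ ⊆ range q := extremePoints_convexHull_subset
  have hhull : convexHull ℝ ((convexHull ℝ (range q)).extremePoints ℝ) =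
      convexHull ℝ (range q) := by
    rw [← (((finite_range q).subset hVq).isClosed_convexHull ℝ).closure_eq]
    exact closure_convexHull_extremePoints ((finite_range q).isCompact_convexHull ℝ)
      (convex_convexHull ℝ _)
  have : Nonempty ((convexHull ℝ (range q)).extremePoints ℝ) := by
    rw [nonempty_coe_sort, ← convexHull_nonempty_iff (𝕜 := ℝ), hhull, convexHull_nonempty_iff]
    exact range_nonempty q
  choose g hg using fun v : (convexHull ℝ (range q)).extremePoints ℝ => hVq v.2
  have hg_inj : g.Injective := fun v v' h => Subtype.ext (by rw [← hg, ← hg, h])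
  exact ⟨_, Function.invFun g, Function.invFun_surjective hg_inj,
    (convex_convexHull ℝ _).convexIndependent_extremePoints, hhull⟩

end ConvexIndependent

section Main

variable {α ι κ : Type*} [Finite ι] [Finite κ] {p : α → Fin 2 → ℚ} {s : κ → Fin 2 → ℚ}
  {q : ι → Fin 2 → ℝ}

lemma exists_ratPoint_of_convexIndependent [Nonempty ι] [Nonempty κ] (hq : ConvexIndependent ℝ q)
    (hsq : range (ratPoint ∘ s) ⊆ convexHull ℝ (range q))
    (hqp : range q ⊆ convexHull ℝ (range (ratPoint ∘ p))) :
    ∃ r : ι → Fin 2 → ℚ, range (ratPoint ∘ s) ⊆ convexHull ℝ (range (ratPoint ∘ r)) ∧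
      range (ratPoint ∘ r) ⊆ convexHull ℝ (range (ratPoint ∘ p)) := by
  rcases lt_or_ge (ENat.card ι) 3 with hι | hι
  · obtain ⟨r, hr⟩ := exists_range_subset_convexHull_range_comp hι hsq
    refine ⟨s ∘ r, hr, ?_⟩
    exact (range_comp_subset_range r _).trans
      (hsq.trans ((convex_convexHull ℝ _).convexHull_subset_iff.2 hqp))
  · obtain ⟨σ, hσ⟩ := exists_isConvexPolygon_of_convexIndependent hq hι
    have hleft (i : ι) : convexHull ℝ (range q) ⊆ orient (q i) (q (σ i)) ⁻¹' Ici 0 :=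
      convexHull_min (range_subset_iff.2 (hσ.orient_nonneg i))
        (convex_preimage_orient _ _ (convex_Ici 0))
    have hnested : IsNested (convexHull ℝ (range (ratPoint ∘ p))) (ratPoint ∘ s) σ q :=
      ⟨hσ, range_subset_iff.1 hqp, fun i j => hleft i (hsq (mem_range_self j))⟩
    obtain ⟨r, hr⟩ := hnested.exists_ratPoint
      fun x => mem_interior_or_onRationalSegment_of_mem_convexHull
    exact ⟨r, range_subset_iff.2 fun j => hr.mem_convexHull_range fun i =>
      hr.orient_apply_nonneg i j, range_subset_iff.2 hr.mem⟩

theorem stmt11_general (hsq : convexHull ℝ (range (ratPoint ∘ s)) ⊆ convexHull ℝ (range q))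
    (hqp : convexHull ℝ (range q) ⊆ convexHull ℝ (range (ratPoint ∘ p))) :
    ∃ r : ι → Fin 2 → ℚ,
      convexHull ℝ (range (ratPoint ∘ s)) ⊆ convexHull ℝ (range (ratPoint ∘ r)) ∧
      convexHull ℝ (range (ratPoint ∘ r)) ⊆ convexHull ℝ (range (ratPoint ∘ p)) := by
  have hull_subset {A B : Set (Fin 2 → ℝ)} :
      convexHull ℝ A ⊆ convexHull ℝ B ↔ A ⊆ convexHull ℝ B :=
    (convex_convexHull ℝ B).convexHull_subset_iff
  simp only [hull_subset] at hsq hqp ⊢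
  cases isEmpty_or_nonempty κ with
  | inl _ =>
    have hα (i : ι) : Nonempty α := by
      have := convexHull_nonempty_iff.1 ⟨_, hqp (mem_range_self i)⟩
      exact range_nonempty_iff_nonempty.1 this
    refine ⟨fun i => p (hα i).some, range_subset_iff.2 isEmptyElim, range_subset_iff.2 fun i => ?_⟩
    exact subset_convexHull ℝ _ (mem_range_self _)
  | inr hκ =>
    have : Nonempty ι := range_nonempty_iff_nonempty.1
      (convexHull_nonempty_iff.1 ⟨_, hsq (mem_range_self hκ.some)⟩)
    obtain ⟨V, f, hf, hV, hhull⟩ := exists_surjective_convexIndependent q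
    have : Finite V := .of_surjective f hf
    have : Nonempty V := ⟨f (Classical.arbitrary ι)⟩
    obtain ⟨r, hsr, hrp⟩ := exists_ratPoint_of_convexIndependent (p := p) hV
      (by rwa [Subtype.range_coe, hhull])
      ((subset_convexHull ℝ _).trans (by
        rw [Subtype.range_coe, hhull]
        exact hull_subset.2 hqp))
    refine ⟨r ∘ f, ?_⟩
    rw [← Function.comp_assoc, hf.range_comp]
    exact ⟨hsr, hrp⟩

end Main

/-- Let `P ⊆ ℝ²` be a convex polygon with rational vertices and `S ⊆ P` the convex hull
of finitely many rational points. If `k` is the minimum number of points of `ℝ²` whose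
convex hull `Q` satisfies `S ⊆ Q ⊆ P`, then there are `k` rational points whose convex
hull is nested between `P` and `S`. -/
theorem stmt11 {N m : ℕ} (p : Fin N → Fin 2 → ℚ) (s : Fin m → Fin 2 → ℚ)
    (P S : Set (Fin 2 → ℝ))
    (hP : P = convexHull ℝ (Set.range fun i : Fin N => fun x => ((p i x : ℝ))))
    (hS : S = convexHull ℝ (Set.range fun j : Fin m => fun x => ((s j x : ℝ))))
    (hSP : S ⊆ P)
    (k : ℕ)
    (hk : IsLeast {k : ℕ | ∃ q : Fin k → Fin 2 → ℝ,
        S ⊆ convexHull ℝ (Set.range q) ∧ convexHull ℝ (Set.range q) ⊆ P} k) :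
    ∃ q : Fin k → Fin 2 → ℚ,
      S ⊆ convexHull ℝ (Set.range fun i => fun x => ((q i x : ℝ))) ∧
      convexHull ℝ (Set.range fun i => fun x => ((q i x : ℝ))) ⊆ P := by
  subst hP hS
  obtain ⟨q, hsq, hqp⟩ := hk.1
  exact stmt11_general hsq hqp
end

section
/- Let M ∈ ℚ_+^{6×6} be the matrix with rows (1/8, 1/2, 17/22, 0, 0, 0), (0, 0, 0, 1/2, 3/4, 7/12), (3/4, 3/4, 3/11, 2, 1/2, 1/6), (1/4, 1/4, 8/11, 1/4, 19/8, 55/24), (1/2, 1/8, 1/11, 1/8, 15/16, 17/16), (11/16, 5/16, 7/44, 1/16, 7/32, 43/96). Then rank(M) = 4, rrk+(M) = 5, and rk+(M) = 5. -/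
open Matrix

/-- The nonnegative rank of a nonnegative real matrix: the smallest inner dimension
of a factorization `M = W * H` into nonnegative matrices. -/
noncomputable def rkPos {n m : ℕ} (M : Matrix (Fin n) (Fin m) ℝ) : ℕ :=
  sInf {d : ℕ | ∃ W : Matrix (Fin n) (Fin d) ℝ, ∃ H : Matrix (Fin d) (Fin m) ℝ,
    (∀ i k, 0 ≤ W i k) ∧ (∀ k j, 0 ≤ H k j) ∧ M = W * H}

/-- The `6 × 6` rational matrix of Theorem 5 of the paper. -/
def paperMatrix : Matrix (Fin 6) (Fin 6) ℚ :=
  !![1/8,   1/2,  17/22, 0,    0,     0;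
     0,     0,    0,     1/2,  3/4,   7/12;
     3/4,   3/4,  3/11,  2,    1/2,   1/6;
     1/4,   1/4,  8/11,  1/4,  19/8,  55/24;
     1/2,   1/8,  1/11,  1/8,  15/16, 17/16;
     11/16, 5/16, 7/44,  1/16, 7/32,  43/96]

/-!
A factorization `M = W * H` of inner dimension `rank M = 4` keeps the columns of `W` in the column
space of `M`. Row `0` of `M` vanishes on columns `3`, `4`, `5`, so every `k` with `W 0 k ≠ 0` gives
a row of `H` vanishing there; as these three columns have rank `3`, there is only one such `k`.
Normalized to `W 0 k = 1`, column `k` of `W` lies coordinatewise below each of columns `0`, `1`, `2`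
of `M` normalized in the same way. These bounds together with a linear equation of the column space
make the coordinate `W 4 k` negative. Hence the nonnegative rank is at least `5`. One explicit
factorization over `ℚ(√2)`, with columns of `W` in the column space of `M`, attains `5` for both
ranks.
-/

/-- A nonnegative matrix factorization `M = W * H`, with the inner dimension given by an arbitrary
finite type. -/
structure IsNMF {m n κ R : Type*} [Fintype κ] [NonUnitalNonAssocSemiring R] [LE R]
    (M : Matrix m n R) (W : Matrix m κ R) (H : Matrix κ n R) : Prop where
  left_nonneg : ∀ i k, 0 ≤ W i k
  right_nonneg : ∀ k j, 0 ≤ H k j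
  eq_mul : M = W * H

theorem isNMF_iff {m n κ R : Type*} [Fintype κ] [NonUnitalNonAssocSemiring R] [LE R]
    {M : Matrix m n R} {W : Matrix m κ R} {H : Matrix κ n R} :
    IsNMF M W H ↔ (∀ i k, 0 ≤ W i k) ∧ (∀ k j, 0 ≤ H k j) ∧ M = W * H :=
  ⟨fun h ↦ ⟨h.1, h.2, h.3⟩, fun h ↦ ⟨h.1, h.2.1, h.2.2⟩⟩

section Rank

variable {l m n κ R : Type*} [Fintype n] [Fintype κ]

theorem card_le_rank_of_det_submatrix_ne_zero [CommRing R] [IsDomain R] [DecidableEq κ]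
    {M : Matrix m n R} (r : κ → m) (c : κ → n) (h : (M.submatrix r c).det ≠ 0) :
    Fintype.card κ ≤ M.rank :=
  (rank_of_det_ne_zero h).symm.trans_le (rank_submatrix_le M r c)

theorem matrix_eq_zero_of_rank_eq_zero [CommRing R] [IsDomain R] [Finite m]
    {A : Matrix m n R} (h : A.rank = 0) : A = 0 := by
  classical
  rw [Matrix.rank, Submodule.finrank_eq_zero, LinearMap.range_eq_bot] at h
  exact Matrix.toLin'.map_eq_zero_iff.mp h

theorem mul_eq_zero_of_card_le_rank_mul [Field R] [Finite l] [Fintype m] {K : Matrix l m R}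
    {W : Matrix m κ R} {H : Matrix κ n R} (hrank : Fintype.card κ ≤ (W * H).rank)
    (h : K * (W * H) = 0) : K * W = 0 := by
  have hadd : (K * W).rank + H.rank ≤ Fintype.card κ :=
    rank_add_rank_le_card_of_mul_eq_zero (by rw [Matrix.mul_assoc, h])
  have hH : (W * H).rank ≤ H.rank := rank_mul_le_right W H
  exact matrix_eq_zero_of_rank_eq_zero (by lia)

end Rank

namespace IsNMF

section Semiring

variable {m n κ R : Type*} [Fintype κ] [Semiring R] [PartialOrder R] [IsOrderedRing R]
  {M : Matrix m n R} {W : Matrix m κ R} {H : Matrix κ n R}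

theorem nonneg (h : IsNMF M W H) (i : m) (j : n) : 0 ≤ M i j := by
  rw [h.eq_mul, mul_apply]
  exact Finset.sum_nonneg fun k _ ↦ mul_nonneg (h.left_nonneg i k) (h.right_nonneg k j)

theorem mul_le (h : IsNMF M W H) (i : m) (k : κ) (j : n) : W i k * H k j ≤ M i j := by
  rw [h.eq_mul, mul_apply]
  exact Finset.single_le_sum (f := fun k ↦ W i k * H k j)
    (fun k _ ↦ mul_nonneg (h.left_nonneg i k) (h.right_nonneg k j)) (Finset.mem_univ k)

theorem mul_eq_zero (h : IsNMF M W H) {i : m} {j : n} (hM : M i j = 0) (k : κ) :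
    W i k * H k j = 0 :=
  ((h.mul_le i k j).trans_eq hM).antisymm (mul_nonneg (h.left_nonneg i k) (h.right_nonneg k j))

theorem self_one [Fintype n] [DecidableEq n] (hM : ∀ i j, 0 ≤ M i j) :
    IsNMF M M (1 : Matrix n n R) where
  left_nonneg := hM
  right_nonneg i j := by rw [one_apply]; split_ifs <;> simp
  eq_mul := (Matrix.mul_one M).symm

end Semiring

section CommSemiring

variable {m n p κ R : Type*} [Fintype p] [Fintype κ] [CommSemiring R] [NoZeroDivisors R]
  [StrongRankCondition R] [PartialOrder R] [IsOrderedRing R]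
  {M : Matrix m n R} {W : Matrix m κ R} {H : Matrix κ n R}

-- Row `k` of `H` vanishes on the columns `c` as soon as `W i k ≠ 0`.
theorem rank_submatrix_le_card_left_eq_zero [DecidableEq R] (h : IsNMF M W H) {i : m}
    (c : p → n) (hc : ∀ j, M i (c j) = 0) :
    (M.submatrix id c).rank ≤ Fintype.card {k // W i k = 0} := by
  have hsub : M.submatrix id c = W * H.submatrix id c := by rw [h.eq_mul]; rfl
  rw [hsub, Fintype.card_subtype]
  refine (rank_mul_le_right _ _).trans (rank_le_card_of_support_subset _ _ ?_)
  rw [Function.support_subset_iff']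
  intro k hk
  have hWk : W i k ≠ 0 := by simpa using hk
  ext j
  exact (mul_eq_zero_iff_left hWk).mp (h.mul_eq_zero (hc j) k)

theorem left_support_subsingleton (h : IsNMF M W H) {i : m} (c : p → n)
    (hc : ∀ j, M i (c j) = 0) (hrank : Fintype.card κ ≤ (M.submatrix id c).rank + 1) :
    {k | W i k ≠ 0}.Subsingleton := by
  classical
  have hzeros := h.rank_submatrix_le_card_left_eq_zero c hc
  have hcompl := Fintype.card_subtype_compl (fun k ↦ W i k = 0)
  have hcard : Fintype.card {k // W i k ≠ 0} ≤ 1 := by lia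
  exact (Set.subsingleton_coe _).mp (Fintype.card_le_one_iff_subsingleton.mp hcard)

-- Row `i` of `M` is then a positive multiple of a single row of `H`.
theorem exists_col_dominated (h : IsNMF M W H) {i : m} {j₀ : n} (c : p → n)
    (hc : ∀ j, M i (c j) = 0) (hrank : Fintype.card κ ≤ (M.submatrix id c).rank + 1)
    (hij : M i j₀ ≠ 0) :
    ∃ k, 0 < W i k ∧ ∀ i' j, W i' k * M i j ≤ W i k * M i' j := by
  obtain ⟨k, -, hk⟩ : ∃ k ∈ Finset.univ, W i k * H k j₀ ≠ 0 :=
    Finset.exists_ne_zero_of_sum_ne_zero (by rwa [h.eq_mul, mul_apply] at hij)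
  have hWk : W i k ≠ 0 := left_ne_zero_of_mul hk
  have hrow (j : n) : M i j = W i k * H k j := by
    rw [h.eq_mul, mul_apply]
    refine Fintype.sum_eq_single k fun k' hk' ↦ ?_
    have : W i k' = 0 := by
      by_contra hne
      exact hk' (h.left_support_subsingleton c hc hrank hne hWk)
    rw [this, zero_mul]
  refine ⟨k, (h.left_nonneg i k).lt_of_ne' hWk, fun i' j ↦ ?_⟩
  calc W i' k * M i j = W i k * (W i' k * H k j) := by rw [hrow, mul_left_comm]
    _ ≤ W i k * M i' j := mul_le_mul_of_nonneg_left (h.mul_le i' k j) (h.left_nonneg i k)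

end CommSemiring

end IsNMF

section NonnegativeRank

variable {m n : ℕ} {M : Matrix (Fin m) (Fin n) ℝ}

theorem isLeast_rkPos (hM : ∀ i j, 0 ≤ M i j) :
    IsLeast {d | ∃ (W : Matrix (Fin m) (Fin d) ℝ) (H : Matrix (Fin d) (Fin n) ℝ), IsNMF M W H}
      (rkPos M) := by
  simp only [rkPos, ← isNMF_iff]
  exact ⟨Nat.sInf_mem ⟨n, M, 1, .self_one hM⟩, fun _ ↦ Nat.sInf_le⟩

theorem isLeast_rrkPos (hM : ∀ i j, 0 ≤ M i j) :
    IsLeast {d | ∃ (W : Matrix (Fin m) (Fin d) ℝ) (H : Matrix (Fin d) (Fin n) ℝ),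
      IsNMF M W H ∧ W.rank = M.rank} (rrkPos M) := by
  have hiff (d : ℕ) (W : Matrix (Fin m) (Fin d) ℝ) (H : Matrix (Fin d) (Fin n) ℝ) :
      ((∀ i k, 0 ≤ W i k) ∧ (∀ k j, 0 ≤ H k j) ∧ M = W * H ∧ W.rank = M.rank) ↔
        IsNMF M W H ∧ W.rank = M.rank := by
    simp only [isNMF_iff, and_assoc]
  simp only [rrkPos, hiff]
  exact ⟨Nat.sInf_mem ⟨n, M, 1, .self_one hM, rfl⟩, fun _ ↦ Nat.sInf_le⟩

end NonnegativeRank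

section PaperMatrix

/-- The paper's matrix with its entries read in `ℝ`, where its factorizations live. -/
abbrev realPaperMatrix : Matrix (Fin 6) (Fin 6) ℝ :=
  paperMatrix.map ((↑) : ℚ → ℝ)

/-- A basis of the left kernel of the paper's matrix: its rows are the linear equations cutting out
the column space, solved for the last two coordinates. -/
noncomputable def leftKernel : Matrix (Fin 2) (Fin 6) ℝ :=
  !![1, 9/4,  -1/2, -1, 1, 0;
     1, 27/8, -3/4, -1, 0, 1]

/-- The left factor of a restricted factorization of the paper's matrix, for `s = √2`. Columns
`0`, `1`, `2` span a triangle containing columns `0`, `1`, `2` of the paper's matrix, and columns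
`0`, `3`, `4` one containing columns `3`, `4`, `5`; their common vertex lies on the line where both
coordinates `0` and `1` vanish. -/
noncomputable def leftFactor (s : ℝ) : Matrix (Fin 6) (Fin 5) ℝ :=
  !![0,           (3 + s)/14,    (11 + s)/14,   0,                0;
     0,           0,             0,             (12 - 2*s)/17,    (10 + s)/14;
     2 - s,       1,             (3 - s)/7,     (26 + 7*s)/17,    0;
     s - 1,       0,             (4 + s)/7,     (21 - 12*s)/17,   (78 + 5*s)/28;
     s/2,         (4 - s)/14,    0,             (7 - 4*s)/17,     (66 + s)/56;
     (2 + s)/4,   (15 - 2*s)/28, (3 - s)/28,    0,                (6 - s)/16]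

/-- The right factor belonging to `leftFactor`: its columns are the barycentric coordinates of the
columns of the paper's matrix with respect to the two triangles. -/
noncomputable def rightFactor (s : ℝ) : Matrix (Fin 5) (Fin 6) ℝ :=
  !![(1 + s)/4,   0,             s/11,          (2 - s)/8,        0,               (2 + s)/12;
     (3 - s)/4,   (4 + s)/8,     0,             0,                0,               0;
     0,           (4 - s)/8,     (11 - s)/11,   0,                0,               0;
     0,           0,             0,             (6 + s)/8,        (26 - 7*s)/68,   0;
     0,           0,             0,             0,                (42 + 7*s)/68,   (10 - s)/12]

theorem leftFactor_nonneg {s : ℝ} (h₁ : 1 ≤ s) (h₂ : s ≤ 3 / 2) (i : Fin 6) (k : Fin 5) :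
    0 ≤ leftFactor s i k := by
  fin_cases i <;> fin_cases k <;> simp [leftFactor] <;> linarith

theorem rightFactor_nonneg {s : ℝ} (h₁ : 0 ≤ s) (h₂ : s ≤ 2) (k : Fin 5) (j : Fin 6) :
    0 ≤ rightFactor s k j := by
  fin_cases k <;> fin_cases j <;> simp [rightFactor] <;> linarith

theorem leftFactor_mul_rightFactor {s : ℝ} (hs : s ^ 2 = 2) :
    leftFactor s * rightFactor s = realPaperMatrix := by
  ext i j
  fin_cases i <;> fin_cases j <;>
    simp [leftFactor, rightFactor, paperMatrix, mul_apply, Fin.sum_univ_succ] <;>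
    grind

theorem leftKernel_mul_leftFactor (s : ℝ) : leftKernel * leftFactor s = 0 := by
  ext i k
  fin_cases i <;> fin_cases k <;>
    simp [leftKernel, leftFactor, mul_apply, Fin.sum_univ_succ] <;> ring

theorem isNMF_leftFactor_rightFactor :
    IsNMF realPaperMatrix (leftFactor √2) (rightFactor √2) where
  left_nonneg := leftFactor_nonneg Real.one_lt_sqrt_two.le Real.sqrt_two_lt_three_halves.le
  right_nonneg := rightFactor_nonneg (by positivity) (by linarith [Real.sqrt_two_lt_three_halves])
  eq_mul := (leftFactor_mul_rightFactor (Real.sq_sqrt zero_le_two)).symm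

theorem two_le_rank_leftKernel : 2 ≤ leftKernel.rank :=
  card_le_rank_of_det_submatrix_ne_zero id ![4, 5] (by simp [leftKernel, det_fin_two])

theorem rank_leftFactor_le (s : ℝ) : (leftFactor s).rank ≤ 4 := by
  have hadd := rank_add_rank_le_card_of_mul_eq_zero (leftKernel_mul_leftFactor s)
  rw [Fintype.card_fin] at hadd
  have hker := two_le_rank_leftKernel
  lia

theorem det_realPaperMatrix_submatrix_ne_zero :
    (realPaperMatrix.submatrix ![1, 2, 3] ![3, 4, 5]).det ≠ 0 := by
  have hsub : realPaperMatrix.submatrix ![1, 2, 3] ![3, 4, 5] =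
      !![1/2, 3/4, 7/12; 2, 1/2, 1/6; 1/4, 19/8, 55/24] := by
    ext i j
    fin_cases i <;> fin_cases j <;> simp [paperMatrix]
  rw [hsub]
  simp only [det_fin_three, of_apply, cons_val]
  norm_num

theorem three_le_rank_realPaperMatrix_submatrix :
    3 ≤ (realPaperMatrix.submatrix id ![3, 4, 5]).rank :=
  card_le_rank_of_det_submatrix_ne_zero ![1, 2, 3] id det_realPaperMatrix_submatrix_ne_zero

theorem four_le_rank_realPaperMatrix : 4 ≤ realPaperMatrix.rank := by
  have hdet : (realPaperMatrix.submatrix ![0, 1, 2, 3] ![0, 3, 4, 5]).det =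
      1/8 * (realPaperMatrix.submatrix ![1, 2, 3] ![3, 4, 5]).det := by
    rw [det_succ_row_zero, Fintype.sum_eq_single 0]
    · simp only [submatrix_submatrix]
      congr 1
      simp [paperMatrix]
    · intro j hj
      fin_cases j <;> simp [paperMatrix] at hj ⊢
  refine card_le_rank_of_det_submatrix_ne_zero ![0, 1, 2, 3] ![0, 3, 4, 5] ?_
  rw [hdet]
  exact mul_ne_zero (by norm_num) det_realPaperMatrix_submatrix_ne_zero

theorem rank_realPaperMatrix_le_rank_leftFactor :
    realPaperMatrix.rank ≤ (leftFactor √2).rank := by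
  rw [isNMF_leftFactor_rightFactor.eq_mul]
  exact rank_mul_le_left _ _

theorem rank_realPaperMatrix : realPaperMatrix.rank = 4 :=
  (rank_realPaperMatrix_le_rank_leftFactor.trans (rank_leftFactor_le _)).antisymm
    four_le_rank_realPaperMatrix

theorem rank_leftFactor_sqrt_two : (leftFactor √2).rank = realPaperMatrix.rank :=
  ((rank_leftFactor_le _).trans four_le_rank_realPaperMatrix).antisymm
    rank_realPaperMatrix_le_rank_leftFactor

theorem leftKernel_mul_realPaperMatrix : leftKernel * realPaperMatrix = 0 := by
  rw [isNMF_leftFactor_rightFactor.eq_mul, ← Matrix.mul_assoc, leftKernel_mul_leftFactor,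
    Matrix.zero_mul]

theorem four_lt_card_of_isNMF_realPaperMatrix {κ : Type*} [Fintype κ] {W : Matrix (Fin 6) κ ℝ}
    {H : Matrix κ (Fin 6) ℝ} (h : IsNMF realPaperMatrix W H) : 4 < Fintype.card κ := by
  by_contra! hcard
  have hker : leftKernel * W = 0 := by
    have hrank := hcard.trans four_le_rank_realPaperMatrix
    have hzero := leftKernel_mul_realPaperMatrix
    rw [h.eq_mul] at hrank hzero
    exact mul_eq_zero_of_card_le_rank_mul hrank hzero
  obtain ⟨k, hpos, hdom⟩ : ∃ k, 0 < W 0 k ∧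
      ∀ i j, W i k * realPaperMatrix 0 j ≤ W 0 k * realPaperMatrix i j :=
    h.exists_col_dominated ![3, 4, 5] (j₀ := 0)
      (by intro j; fin_cases j <;> simp [paperMatrix])
      (by have := three_le_rank_realPaperMatrix_submatrix; lia)
      (by simp [paperMatrix])
  have hrel : W 0 k + (9/4 * W 1 k + (-(1/2 * W 2 k) + (-W 3 k + W 4 k))) = 0 := by
    simpa [leftKernel, mul_apply, Fin.sum_univ_succ, neg_div] using congrFun₂ hker 0 k
  have h₂ : W 2 k * (17/22) ≤ W 0 k * (3/11) := by simpa [paperMatrix] using hdom 2 2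
  have h₃ : W 3 k * (1/2) ≤ W 0 k * (1/4) := by simpa [paperMatrix] using hdom 3 1
  -- The last two bounds give `W 2 k / 2 + W 3 k ≤ (3/17 + 1/2) * W 0 k`, against `hrel`.
  linarith [h.left_nonneg 1 k, h.left_nonneg 4 k]

end PaperMatrix

/-- For the matrix `M` above: `rank M = 4`, `rrk+(M) = 5`, and `rk+(M) = 5`. -/
theorem stmt15 :
    (paperMatrix.map ((↑) : ℚ → ℝ)).rank = 4 ∧
    rrkPos (paperMatrix.map ((↑) : ℚ → ℝ)) = 5 ∧
    rkPos (paperMatrix.map ((↑) : ℚ → ℝ)) = 5 := by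
  have hnonneg := isNMF_leftFactor_rightFactor.nonneg
  have hlower {d : ℕ} {W : Matrix (Fin 6) (Fin d) ℝ} {H : Matrix (Fin d) (Fin 6) ℝ}
      (h : IsNMF realPaperMatrix W H) : 5 ≤ d :=
    (four_lt_card_of_isNMF_realPaperMatrix h).trans_eq (Fintype.card_fin d)
  refine ⟨rank_realPaperMatrix, (isLeast_rrkPos hnonneg).unique ⟨?_, ?_⟩,
    (isLeast_rkPos hnonneg).unique ⟨?_, ?_⟩⟩
  · exact ⟨_, _, isNMF_leftFactor_rightFactor, rank_leftFactor_sqrt_two⟩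
  · exact fun d ⟨_, _, h, _⟩ ↦ hlower h
  · exact ⟨_, _, isNMF_leftFactor_rightFactor⟩
  · exact fun d ⟨_, _, h⟩ ↦ hlower h
end
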